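/- arXiv:1404.1182 — 3 statements merged into one kernel-verified Lean document; each statement's English description precedes it below -/
import Mathlib

section
/- There exists n₀ such that for every n ≥ n₀ the following holds: if H is any simple graph on n vertices with no isolated vertices and with maximum degree Δ(H) ≤ √n/200, then ex(n,H) = C(n−1,2) + δ(H) − 1, where δ(H) is the minimum degree of H. -/
/-- `G` contains a copy of `H`, i.e. a subgraph isomorphic to `H`: there is an
injection of the vertices of `H` into the vertices of `G` mapping edges to edges. -/
def ContainsCopy {α β : Type*} (G : SimpleGraph α) (H : SimpleGraph β) : Prop :=
  ∃ f : β → α, Function.Injective f ∧ ∀ u v : β, H.Adj u v → G.Adj (f u) (f v)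

/-- The extremal number `ex(n, H)`: the maximum number of edges in a simple graph on
`n` vertices containing no subgraph isomorphic to `H`. -/
noncomputable def exNum (n : ℕ) {β : Type*} (H : SimpleGraph β) : ℕ :=
  sSup {m | ∃ G : SimpleGraph (Fin n), ¬ ContainsCopy G H ∧ m = G.edgeSet.ncard}

open Finset

/-!
Let `F` be the complement of a graph `G` with more than `C(n - 1, 2) + δ(H) - 1` edges; it has at
most `n - 1 - δ(H)` edges, and a copy of `H` in `G` is a packing of `F` and `H`. At most one vertex
of `F` has degree more than `n / 2`: a vertex of maximum degree is mapped to a vertex `h` of minimum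
degree in `H`, and the neighbours of `h` are used up by pairwise non-adjacent vertices of `F` of
degree at most one, not adjacent to it. The remaining vertices of `F` of large degree are few; they
are placed greedily, far from each other and so that no vertex of `H` has too much `F`-degree placed
on its neighbours. Any extension of this to a bijection with fewest conflicts is a packing, since a
vertex of small degree in conflict could otherwise be exchanged with another vertex.
-/

theorem exists_isIndepSet_forall_exists_adj {V : Type*} (G : SimpleGraph V) (M : Finset V) :
    ∃ W ⊆ M, G.IsIndepSet W ∧ ∀ x ∈ M, x ∉ W → ∃ w ∈ W, G.Adj w x := by
  classical
  obtain ⟨W, hW⟩ := exists_maximal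
    (s := M.powerset.filter fun W : Finset V => G.IsIndepSet (W : Set V)) ⟨∅, by simp⟩
  obtain ⟨hWM, hind⟩ : W ⊆ M ∧ G.IsIndepSet W := by simpa using hW.prop
  refine ⟨W, hWM, hind, fun x hxM hxW => ?_⟩
  by_contra! hno
  have hins : G.IsIndepSet (insert x W : Finset V) := by
    rw [coe_insert]
    exact hind.insert fun w hw _ => ⟨fun hxw => hno w hw hxw.symm, hno w hw⟩
  have hle := hW.le_of_ge (y := insert x W)
    (mem_filter.2 ⟨mem_powerset.2 (insert_subset hxM hWM), hins⟩) (subset_insert x W)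
  exact hxW (hle (mem_insert_self x W))

section Degree

variable {V : Type*} [Fintype V] (G : SimpleGraph V) [DecidableRel G.Adj]

/-- The closed neighbourhood of `v`, that is, `v` together with its neighbours. -/
def closedNbhd [DecidableEq V] (v : V) : Finset V :=
  insert v (G.neighborFinset v)

theorem mem_closedNbhd [DecidableEq V] {v w : V} : w ∈ closedNbhd G v ↔ w = v ∨ G.Adj v w := by
  simp [closedNbhd]

theorem card_closedNbhd [DecidableEq V] (v : V) : #(closedNbhd G v) = G.degree v + 1 := by
  simp [closedNbhd]

theorem card_biUnion_closedNbhd_le [DecidableEq V] {D : ℕ} (hD : ∀ v, G.degree v ≤ D) (v : V) :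
    #((closedNbhd G v).biUnion (closedNbhd G)) ≤ (D + 1) ^ 2 := by
  have hball : ∀ w, #(closedNbhd G w) ≤ D + 1 := fun w => by
    simpa [card_closedNbhd] using hD w
  calc #((closedNbhd G v).biUnion (closedNbhd G)) ≤ #(closedNbhd G v) * (D + 1) :=
        card_biUnion_le_card_mul _ _ _ fun w _ => hball w
    _ ≤ (D + 1) ^ 2 := by rw [sq]; exact Nat.mul_le_mul_right _ (hball v)

theorem degree_add_degree_le_card_edgeFinset_add_one {a b : V} (hab : a ≠ b) :
    G.degree a + G.degree b ≤ #G.edgeFinset + 1 := by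
  classical
  rw [← G.card_incidenceFinset_eq_degree a, ← G.card_incidenceFinset_eq_degree b,
    ← card_union_add_card_inter]
  refine add_le_add (card_le_card (union_subset (G.incidenceFinset_subset a)
    (G.incidenceFinset_subset b))) ?_
  rw [← card_singleton s(a, b)]
  refine card_le_card fun e he => ?_
  rw [mem_inter, SimpleGraph.mem_incidenceFinset, SimpleGraph.mem_incidenceFinset] at he
  exact mem_singleton.2 (G.incidenceSet_inter_incidenceSet_subset hab he)

theorem card_mul_le_two_mul_card_edgeFinset {B : Finset V} {k : ℕ}
    (hB : ∀ v ∈ B, k ≤ G.degree v) : #B * k ≤ 2 * #G.edgeFinset :=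
  calc #B * k ≤ ∑ v ∈ B, G.degree v := card_nsmul_le_sum _ _ _ hB
    _ ≤ ∑ v, G.degree v := sum_le_sum_of_subset (subset_univ B)
    _ = 2 * #G.edgeFinset := G.sum_degrees_eq_twice_card_edges

theorem sum_degree_compl_closedNbhd_add_le [DecidableEq V] (v : V) :
    ∑ x ∈ (closedNbhd G v)ᶜ, G.degree x + 2 * G.degree v ≤ 2 * #G.edgeFinset := by
  have hnbhd : G.degree v ≤ ∑ x ∈ G.neighborFinset v, G.degree x := by
    rw [← G.card_neighborFinset_eq_degree, card_eq_sum_ones]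
    refine sum_le_sum fun x hx => ?_
    exact (G.degree_pos_iff_exists_adj x).2 ⟨v, ((G.mem_neighborFinset v x).1 hx).symm⟩
  rw [← G.sum_degrees_eq_twice_card_edges, ← sum_add_sum_compl (closedNbhd G v)]
  nth_rw 2 [closedNbhd]
  rw [sum_insert (G.notMem_neighborFinset_self v)]
  omega

theorem exists_isIndepSet_degree_le_one (N : Finset V) :
    ∃ W ⊆ N, G.IsIndepSet W ∧ (∀ w ∈ W, G.degree w ≤ 1) ∧
      2 * #N ≤ ∑ x ∈ N, G.degree x + 2 * #W := by
  classical
  let M : Finset V := {x ∈ N | G.degree x ≤ 1}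
  have hMN : M ⊆ N := filter_subset _ _
  obtain ⟨W, hWM, hind, hdom⟩ := exists_isIndepSet_forall_exists_adj G M
  refine ⟨W, hWM.trans hMN, hind, fun w hw => (mem_filter.1 (hWM hw)).2, ?_⟩
  have hlarge : #(N \ M) * 2 ≤ ∑ x ∈ N \ M, G.degree x :=
    card_nsmul_le_sum (N \ M) (fun x => G.degree x) 2 fun x hx => by grind
  have hrest : #(M \ W) * 1 ≤ ∑ x ∈ M \ W, G.degree x := by
    refine card_nsmul_le_sum (M \ W) (fun x => G.degree x) 1 fun x hx => ?_
    obtain ⟨hxM, hxW⟩ := mem_sdiff.1 hx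
    obtain ⟨w, -, hwx⟩ := hdom x hxM hxW
    exact (G.degree_pos_iff_exists_adj x).2 ⟨w, hwx.symm⟩
  have hcover : #(M \ W) ≤ ∑ w ∈ W, G.degree w := by
    calc #(M \ W) ≤ #(W.biUnion fun w => G.neighborFinset w) :=
          card_le_card fun x hx => by simpa using hdom x (mem_sdiff.1 hx).1 (mem_sdiff.1 hx).2
      _ ≤ ∑ w ∈ W, #(G.neighborFinset w) := card_biUnion_le
      _ = ∑ w ∈ W, G.degree w := by simp only [G.card_neighborFinset_eq_degree]
  have hcardN := card_sdiff_add_card_eq_card hMN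
  have hcardM := card_sdiff_add_card_eq_card hWM
  have hsumN := sum_sdiff (f := fun x => G.degree x) hMN
  have hsumM := sum_sdiff (f := fun x => G.degree x) hWM
  omega

theorem exists_isIndepSet_insert_degree_le_one [DecidableEq V] (v : V) {k : ℕ}
    (hk : #G.edgeFinset + k + 1 ≤ Fintype.card V) :
    ∃ L : Finset V, v ∉ L ∧ #L = k ∧ G.IsIndepSet (insert v L : Finset V) ∧
      ∀ w ∈ L, G.degree w ≤ 1 := by
  obtain ⟨W, hWN, hind, hdeg, hcard⟩ := exists_isIndepSet_degree_le_one G (closedNbhd G v)ᶜ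
  have hsum := sum_degree_compl_closedNbhd_add_le G v
  have hN := card_add_card_compl (closedNbhd G v)
  rw [card_closedNbhd] at hN
  obtain ⟨L, hLW, hLcard⟩ := exists_subset_card_eq (s := W) (n := k) (by omega)
  have hfar : ∀ w ∈ L, w ≠ v ∧ ¬ G.Adj v w := fun w hw => by
    simpa [mem_closedNbhd] using hWN (hLW hw)
  refine ⟨L, fun hv => (hfar v hv).1 rfl, hLcard, ?_, fun w hw => hdeg w (hLW hw)⟩
  rw [coe_insert]
  exact (hind.mono (coe_subset.2 hLW)).insert fun w hw _ =>
    ⟨(hfar w hw).2, fun hwv => (hfar w hw).2 hwv.symm⟩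

end Degree

section Load

variable {V ι : Type*} (H : SimpleGraph V) [DecidableRel H.Adj] (d : ι → ℕ)

/-- The load on the vertex `u` of a placement `g` of the elements of `B`, where `s` has weight
`d s`: the total weight of the elements placed on neighbours of `u`. -/
def load (B : Finset ι) (g : ι → V) (u : V) : ℕ :=
  ∑ s ∈ B with H.Adj u (g s), d s

theorem load_congr {B : Finset ι} {g g' : ι → V} (h : ∀ s ∈ B, g s = g' s) (u : V) :
    load H d B g u = load H d B g' u := by
  unfold load
  rw [filter_congr fun s hs => by rw [h s hs]]

theorem load_insert [DecidableEq ι] {b : ι} {B : Finset ι} (hb : b ∉ B) (g : ι → V) (u : V) :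
    load H d (insert b B) g u = (if H.Adj u (g b) then d b else 0) + load H d B g u := by
  simp only [load, sum_filter, sum_insert hb]

theorem load_union_le [DecidableEq ι] (S B : Finset ι) (g : ι → V) (u : V) :
    load H d (S ∪ B) g u ≤ load H d S g u + load H d B g u := by
  simp only [load, sum_filter]
  rw [← sum_union_inter]
  exact Nat.le_add_right _ _

variable [Fintype V]

theorem sum_load (B : Finset ι) (g : ι → V) :
    ∑ u, load H d B g u = ∑ s ∈ B, H.degree (g s) * d s := by
  simp only [load, sum_filter]
  rw [sum_comm]
  refine sum_congr rfl fun s _ => ?_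
  rw [← sum_filter, sum_const, smul_eq_mul, ← H.card_neighborFinset_eq_degree,
    H.neighborFinset_eq_filter]
  simp only [H.adj_comm]

theorem load_univ_equiv_le [Fintype ι] {D t : ℕ} {Q : Finset ι} {q : ι → V} {e : ι ≃ V}
    (he : ∀ s ∈ Q, e s = q s) (ht : ∀ s ∉ Q, d s ≤ t) {u : V} (hu : H.degree u ≤ D) :
    load H d univ e u ≤ load H d Q q u + D * t := by
  classical
  have hcard : #{s ∈ Qᶜ | H.Adj u (e s)} ≤ D := by
    refine le_trans ?_ hu
    rw [← H.card_neighborFinset_eq_degree]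
    exact card_le_card_of_injOn e (fun s hs => by simpa using (mem_filter.1 hs).2)
      e.injective.injOn
  have hrest : load H d Qᶜ e u ≤ D * t :=
    (sum_le_card_nsmul _ _ t fun s hs => ht s (mem_compl.1 (mem_filter.1 hs).1)).trans
      (Nat.mul_le_mul_right t hcard)
  calc load H d univ e u = load H d (Q ∪ Qᶜ) e u := by rw [union_compl]
    _ ≤ load H d Q e u + load H d Qᶜ e u := load_union_le H d Q Qᶜ e u
    _ ≤ load H d Q q u + D * t := add_le_add (load_congr H d he u).le hrest

variable {H d} {D τ r : ℕ} (hD : ∀ v, H.degree v ≤ D)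

include hD

theorem card_lt_load_le {B : Finset ι} (g : ι → V) (hr : D * ∑ s ∈ B, d s ≤ r * τ) :
    #{u | τ < load H d B g u} ≤ r := by
  by_contra! hlt
  have hsum : #{u | τ < load H d B g u} * (τ + 1) ≤ r * τ :=
    calc #{u | τ < load H d B g u} * (τ + 1) ≤ ∑ u with τ < load H d B g u, load H d B g u :=
          card_nsmul_le_sum _ (load H d B g) (τ + 1) fun u hu => (mem_filter.1 hu).2
      _ ≤ ∑ u, load H d B g u := sum_le_sum_of_subset (filter_subset _ _)
      _ = ∑ s ∈ B, H.degree (g s) * d s := sum_load H d B g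
      _ ≤ D * ∑ s ∈ B, d s := by
          rw [mul_sum]
          gcongr with s
          exact hD (g s)
      _ ≤ r * τ := hr
  nlinarith

theorem exists_far_vertex_nbhd_load_le [DecidableEq V] {X : Finset V} {B : Finset ι} (g : ι → V)
    (hr : D * ∑ s ∈ B, d s ≤ r * τ) (hcard : #X + #B * (D + 1) + r * D < Fintype.card V) :
    ∃ h ∉ X, (∀ s ∈ B, h ∉ closedNbhd H (g s)) ∧ ∀ u, H.Adj u h → load H d B g u ≤ τ := by
  let near : Finset V := B.biUnion fun s => closedNbhd H (g s)
  let overloaded : Finset V :=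
    (univ.filter fun u => τ < load H d B g u).biUnion fun u => H.neighborFinset u
  have hnear : #near ≤ #B * (D + 1) :=
    card_biUnion_le_card_mul _ _ _ fun s _ => by simpa [card_closedNbhd] using hD (g s)
  have hover : #overloaded ≤ r * D :=
    (card_biUnion_le_card_mul _ _ _ fun u _ => by simpa using hD u).trans
      (Nat.mul_le_mul_right D (card_lt_load_le hD g hr))
  obtain ⟨h, hh⟩ : ∃ h, h ∉ X ∪ near ∪ overloaded := by
    by_contra! hall
    have htotal := card_union_le (X ∪ near) overloaded
    have hXnear := card_union_le X near
    rw [eq_univ_of_forall hall, card_univ] at htotal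
    omega
  simp only [near, overloaded, mem_union, mem_biUnion, mem_filter, mem_univ, true_and,
    SimpleGraph.mem_neighborFinset, not_or, not_exists, not_and] at hh
  exact ⟨h, hh.1.1, hh.1.2, fun u hu => not_lt.1 fun hlt => hh.2 u hlt hu⟩

end Load

/-- `g` places the elements of `B`, of weights `d`, on distinct pairwise non-adjacent vertices
outside `X`, in such a way that no vertex carries a load of more than `M`. -/
structure IsBalancedPlacement {V ι : Type*} (H : SimpleGraph V) [DecidableRel H.Adj]
    (X : Finset V) (d : ι → ℕ) (M : ℕ) (B : Finset ι) (g : ι → V) : Prop where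
  injOn : Set.InjOn g B
  notMem : ∀ s ∈ B, g s ∉ X
  not_adj : ∀ s ∈ B, ∀ s' ∈ B, ¬ H.Adj (g s) (g s')
  load_le : ∀ u, load H d B g u ≤ M

section Placement

variable {V ι : Type*} [Fintype V] {H : SimpleGraph V} [DecidableRel H.Adj] {X : Finset V}
  {d : ι → ℕ}

theorem IsBalancedPlacement.insert [DecidableEq V] [DecidableEq ι] {M : ℕ} {B : Finset ι}
    {g : ι → V} (hg : IsBalancedPlacement H X d M B g) {b : ι} (hb : b ∉ B) {h : V} (hX : h ∉ X)
    (hfar : ∀ s ∈ B, h ∉ closedNbhd H (g s))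
    (hload : ∀ u, H.Adj u h → load H d B g u + d b ≤ M) :
    IsBalancedPlacement H X d M (insert b B) (Function.update g b h) := by
  have hfar' : ∀ s ∈ B, h ≠ g s ∧ ¬ H.Adj (g s) h := fun s hs => by
    simpa [mem_closedNbhd] using hfar s hs
  have hold : ∀ s ∈ B, Function.update g b h s = g s := fun s hs =>
    Function.update_of_ne (ne_of_mem_of_not_mem hs hb) _ _
  refine ⟨?_, ?_, ?_, fun u => ?_⟩
  · rw [coe_insert, Set.injOn_insert (by simpa using hb)]
    refine ⟨hg.injOn.congr fun s hs => (hold s hs).symm, ?_⟩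
    rintro ⟨s, hs, heq⟩
    rw [hold s hs, Function.update_self] at heq
    exact (hfar' s hs).1 heq.symm
  · rw [forall_mem_insert, Function.update_self]
    exact ⟨hX, fun s hs => hold s hs ▸ hg.notMem s hs⟩
  · simp only [forall_mem_insert, Function.update_self]
    refine ⟨⟨H.irrefl, fun s hs => ?_⟩, fun s hs => ⟨?_, fun s' hs' => ?_⟩⟩
    · rw [hold s hs, H.adj_comm]
      exact (hfar' s hs).2
    · rw [hold s hs]
      exact (hfar' s hs).2
    · rw [hold s hs, hold s' hs']
      exact hg.not_adj s hs s' hs'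
  · rw [load_insert H d hb, load_congr H d hold, Function.update_self]
    split_ifs with hu
    · rw [add_comm]
      exact hload u hu
    · rw [zero_add]
      exact hg.load_le u

-- Greedily: each new element avoids the neighbours of the vertices whose load already exceeds `τ`.
theorem exists_isBalancedPlacement {D τ r m : ℕ} (hD : ∀ v, H.degree v ≤ D) {B : Finset ι}
    (hm : ∀ s ∈ B, d s ≤ m) (hr : D * ∑ s ∈ B, d s ≤ r * τ)
    (hcard : #X + #B * (D + 1) + r * D < Fintype.card V) :
    ∃ g : ι → V, IsBalancedPlacement H X d (τ + m) B g := by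
  classical
  induction B using Finset.induction_on with
  | empty =>
    have : Nonempty V := Fintype.card_pos_iff.1 (by omega)
    exact ⟨fun _ => Classical.arbitrary V, by simp, by simp, by simp, by simp [load]⟩
  | insert b B hb ih =>
    have hr' : D * ∑ s ∈ B, d s ≤ r * τ :=
      (Nat.mul_le_mul_left D (sum_le_sum_of_subset (subset_insert b B))).trans hr
    have hcard' : #X + #B * (D + 1) + r * D < Fintype.card V := by
      refine lt_of_le_of_lt ?_ hcard
      gcongr
      exact subset_insert b B
    obtain ⟨g, hg⟩ := ih (fun s hs => hm s (mem_insert_of_mem hs)) hr' hcard'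
    obtain ⟨h, hX, hfar, hload⟩ := exists_far_vertex_nbhd_load_le hD g hr' hcard'
    exact ⟨_, hg.insert hb hX hfar fun u hu =>
      add_le_add (hload u hu) (hm b (mem_insert_self b B))⟩

end Placement

/-- `q` packs the part of `F` on `Q` into the complement of `H`: it is injective on `Q` and sends
no edge of `F` inside `Q` to an edge of `H`. A bijection that does this on the whole vertex set is
a packing of `F` and `H`. -/
structure IsPackingOn {V W : Type*} (F : SimpleGraph W) (H : SimpleGraph V) (Q : Set W)
    (q : W → V) : Prop where
  injOn : Set.InjOn q Q
  not_adj : ∀ ⦃a⦄, a ∈ Q → ∀ ⦃b⦄, b ∈ Q → F.Adj a b → ¬ H.Adj (q a) (q b)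

section Packing

variable {V W : Type*} {F : SimpleGraph W} {H : SimpleGraph V}

theorem IsPackingOn.containsCopy_compl {e : W ≃ V} (he : IsPackingOn F H Set.univ e) :
    ContainsCopy Fᶜ H := by
  refine ⟨e.symm, e.symm.injective, fun u v huv => ⟨e.symm.injective.ne huv.ne, fun hF => ?_⟩⟩
  exact he.not_adj (Set.mem_univ _) (Set.mem_univ _) hF (by simpa using huv)

theorem IsPackingOn.piecewise [DecidableEq W] {S B : Finset W} {p g : W → V}
    (hp : IsPackingOn F H S p) (hg : IsPackingOn F H B g)
    (hne : ∀ s ∈ S, ∀ b ∈ B, p s ≠ g b) (hadj : ∀ s ∈ S, ∀ b ∈ B, ¬ H.Adj (p s) (g b)) :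
    IsPackingOn F H (S ∪ B : Finset W) (S.piecewise p g) := by
  have hmem : ∀ {a}, a ∈ ((S ∪ B : Finset W) : Set W) → a ∉ S → a ∈ B := fun ha haS =>
    (mem_union.1 ha).resolve_left haS
  constructor
  · intro a ha b hb hab
    by_cases haS : a ∈ S <;> by_cases hbS : b ∈ S <;>
      simp only [haS, hbS, not_false_eq_true, piecewise_eq_of_mem, piecewise_eq_of_notMem] at hab
    · exact hp.injOn haS hbS hab
    · exact absurd hab (hne a haS b (hmem hb hbS))
    · exact absurd hab.symm (hne b hbS a (hmem ha haS))
    · exact hg.injOn (hmem ha haS) (hmem hb hbS) hab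
  · intro a ha b hb hF
    by_cases haS : a ∈ S <;> by_cases hbS : b ∈ S <;>
      simp only [haS, hbS, not_false_eq_true, piecewise_eq_of_mem, piecewise_eq_of_notMem]
    · exact hp.not_adj haS hbS hF
    · exact hadj a haS b (hmem hb hbS)
    · exact fun hH => hadj b hbS a (hmem ha haS) hH.symm
    · exact hg.not_adj (hmem ha haS) (hmem hb hbS) hF

theorem IsPackingOn.piecewise_isBalancedPlacement [Fintype V] [DecidableEq V]
    [DecidableEq W] [DecidableRel H.Adj] {C : Finset V} {d : W → ℕ} {M : ℕ} {S B : Finset W}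
    {p g : W → V} (hp : IsPackingOn F H S p) (hpC : Set.MapsTo p S C)
    (hg : IsBalancedPlacement H (C.biUnion (closedNbhd H)) d M B g) :
    IsPackingOn F H (S ∪ B : Finset W) (S.piecewise p g) := by
  have hfar : ∀ s ∈ S, ∀ b ∈ B, g b ≠ p s ∧ ¬ H.Adj (p s) (g b) := fun s hs b hb => by
    rw [← not_or, ← mem_closedNbhd]
    exact fun hmem => hg.notMem b hb (mem_biUnion.2 ⟨p s, hpC hs, hmem⟩)
  exact hp.piecewise ⟨hg.injOn, fun a ha b hb _ => hg.not_adj a ha b hb⟩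
    (fun s hs b hb => (hfar s hs b hb).1.symm) fun s hs b hb => (hfar s hs b hb).2

theorem load_piecewise_le [DecidableEq W] [DecidableRel H.Adj] (d : W → ℕ) (S B : Finset W)
    (p g : W → V) (u : V) :
    load H d (S ∪ B) (S.piecewise p g) u ≤ load H d S p u + load H d B g u := by
  rw [← union_sdiff_self_eq_union]
  refine (load_union_le H d S (B \ S) _ u).trans (add_le_add ?_ ?_)
  · exact (load_congr H d (fun s hs => piecewise_eq_of_mem _ _ _ hs) u).le
  · rw [load_congr H d (fun s hs => piecewise_eq_of_notMem _ _ _ (mem_sdiff.1 hs).2)]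
    exact sum_le_sum_of_subset (filter_subset_filter _ sdiff_subset)

section Exchange

variable [Fintype W] [DecidableRel F.Adj] [DecidableRel H.Adj]

/-- The conflicts of a bijection `e`: the ordered pairs that span an edge of `F` and whose images
span an edge of `H`. -/
def conflicts (F : SimpleGraph W) (H : SimpleGraph V) [DecidableRel F.Adj] [DecidableRel H.Adj]
    (e : W ≃ V) : Finset (W × W) :=
  {p | F.Adj p.1 p.2 ∧ H.Adj (e p.1) (e p.2)}

theorem mem_conflicts {e : W ≃ V} {a b : W} :
    (a, b) ∈ conflicts F H e ↔ F.Adj a b ∧ H.Adj (e a) (e b) := by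
  simp [conflicts]

theorem conflicts_swap_trans_ssubset [DecidableEq W] {e : W ≃ V} {a b c : W}
    (hab : (a, b) ∈ conflicts F H e) (hac : ¬ F.Adj a c) (ha : ∀ z, F.Adj a z → ¬ H.Adj (e c) (e z))
    (hc : ∀ z, F.Adj c z → ¬ H.Adj (e a) (e z)) :
    conflicts F H ((Equiv.swap a c).trans e) ⊂ conflicts F H e := by
  set e' := (Equiv.swap a c).trans e
  have he' : ∀ z, z ≠ a → z ≠ c → e' z = e z := fun z hza hzc => by
    simp [e', Equiv.swap_apply_of_ne_of_ne hza hzc]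
  have ha' : ∀ z, F.Adj a z → ¬ H.Adj (e' a) (e' z) := fun z hz => by
    rw [he' z hz.ne' (by rintro rfl; exact hac hz)]
    simpa [e'] using ha z hz
  have hc' : ∀ z, F.Adj c z → ¬ H.Adj (e' c) (e' z) := fun z hz => by
    rw [he' z (by rintro rfl; exact hac hz.symm) hz.ne']
    simpa [e'] using hc z hz
  refine (ssubset_iff_of_subset ?_).2
    ⟨(a, b), hab, fun h => ha' b (mem_conflicts.1 h).1 (mem_conflicts.1 h).2⟩
  rintro ⟨x, y⟩ hxy
  rw [mem_conflicts] at hxy ⊢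
  obtain ⟨hF, hH⟩ := hxy
  have hxa : x ≠ a := by rintro rfl; exact ha' y hF hH
  have hxc : x ≠ c := by rintro rfl; exact hc' y hF hH
  have hya : y ≠ a := by rintro rfl; exact ha' x hF.symm hH.symm
  have hyc : y ≠ c := by rintro rfl; exact hc' x hF.symm hH.symm
  rw [he' x hxa hxc, he' y hya hyc] at hH
  exact ⟨hF, hH⟩

variable [Fintype V] {D t : ℕ} (hD : ∀ v, H.degree v ≤ D)

include hD

theorem exists_exchange_vertex (e : W ≃ V) {a : W} (Q : Finset W) (ha : F.degree a ≤ t)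
    (hcard : load H (F.degree ·) univ e (e a) + D * t + t + #Q < Fintype.card W) :
    ∃ c ∉ Q, ¬ F.Adj a c ∧ (∀ z, F.Adj a z → ¬ H.Adj (e c) (e z)) ∧
      ∀ z, F.Adj c z → ¬ H.Adj (e a) (e z) := by
  classical
  let bad₁ : Finset W :=
    (F.neighborFinset a).biUnion fun z => (H.neighborFinset (e z)).map e.symm.toEmbedding
  let bad₂ : Finset W :=
    (univ.filter fun z => H.Adj (e a) (e z)).biUnion fun z => F.neighborFinset z
  have hbad₁ : #bad₁ ≤ D * t := by
    refine (card_biUnion_le_card_mul _ _ D fun z _ => by simpa using hD (e z)).trans ?_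
    rw [mul_comm, F.card_neighborFinset_eq_degree]
    exact Nat.mul_le_mul_left D ha
  have hbad₂ : #bad₂ ≤ load H (F.degree ·) univ e (e a) :=
    card_biUnion_le.trans_eq (sum_congr rfl fun z _ => F.card_neighborFinset_eq_degree z)
  obtain ⟨c, hc⟩ : ∃ c, c ∉ Q ∪ F.neighborFinset a ∪ bad₁ ∪ bad₂ := by
    by_contra! hall
    have h₁ := card_union_le (Q ∪ F.neighborFinset a ∪ bad₁) bad₂
    have h₂ := card_union_le (Q ∪ F.neighborFinset a) bad₁
    have h₃ := card_union_le Q (F.neighborFinset a)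
    rw [eq_univ_of_forall hall, card_univ] at h₁
    rw [F.card_neighborFinset_eq_degree] at h₃
    omega
  simp only [mem_union, not_or, SimpleGraph.mem_neighborFinset] at hc
  obtain ⟨⟨⟨hcQ, hac⟩, hc₁⟩, hc₂⟩ := hc
  refine ⟨c, hcQ, hac, fun z hz hH => hc₁ ?_, fun z hz hH => hc₂ ?_⟩
  · simpa [bad₁] using ⟨z, hz, hH.symm⟩
  · simpa [bad₂] using ⟨z, hH, hz.symm⟩

-- Among the bijections extending `q`, one with fewest conflicts has none: an element of a conflict
-- could be exchanged with another one so as to remove all conflicts at both.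
theorem IsPackingOn.exists_equiv (hVW : Fintype.card W = Fintype.card V) {Q : Finset W}
    {q : W → V} (hq : IsPackingOn F H Q q) (ht : ∀ s ∉ Q, F.degree s ≤ t)
    (hload : ∀ u, (∀ s ∈ Q, q s ≠ u) →
      load H (F.degree ·) Q q u + 2 * (D * t) + t + #Q < Fintype.card W) :
    ∃ e : W ≃ V, IsPackingOn F H Set.univ e := by
  classical
  obtain ⟨e₀, he₀⟩ := exists_equiv_extend_of_card_eq (t := (univ : Finset V))
    (by rw [hVW, card_univ]) (subset_univ _) hq.injOn
  obtain ⟨e, he, hmin⟩ := exists_min_image {e : W ≃ V | ∀ s ∈ Q, e s = q s}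
    (fun e => #(conflicts F H e))
    ⟨e₀.trans (Equiv.subtypeUnivEquiv mem_univ), by simpa using he₀⟩
  simp only [mem_filter, mem_univ, true_and] at he hmin
  refine ⟨e, e.injective.injOn, ?_⟩
  by_contra! hcon
  obtain ⟨a, b, haQ, hab⟩ : ∃ a b, a ∉ Q ∧ (a, b) ∈ conflicts F H e := by
    obtain ⟨a, -, b, -, hF, hH⟩ := hcon
    by_cases ha : a ∈ Q
    · by_cases hb : b ∈ Q
      · exact absurd (by rwa [he a ha, he b hb] at hH) (hq.not_adj ha hb hF)
      · exact ⟨b, a, hb, mem_conflicts.2 ⟨hF.symm, hH.symm⟩⟩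
    · exact ⟨a, b, ha, mem_conflicts.2 ⟨hF, hH⟩⟩
  have hea : ∀ s ∈ Q, q s ≠ e a := fun s hs hsa => by
    rw [← he s hs] at hsa
    exact haQ (e.injective hsa ▸ hs)
  have hload_e := load_univ_equiv_le H (F.degree ·) he ht (hD (e a))
  have hload_q := hload (e a) hea
  obtain ⟨c, hcQ, hac, ha, hc⟩ := exists_exchange_vertex hD e Q (ht a haQ) (by omega)
  refine (card_lt_card (conflicts_swap_trans_ssubset hab hac ha hc)).not_ge (hmin _ fun s hs => ?_)
  rw [Equiv.trans_apply, Equiv.swap_apply_of_ne_of_ne (ne_of_mem_of_not_mem hs haQ)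
    (ne_of_mem_of_not_mem hs hcQ), he s hs]

end Exchange

section Sparse

variable [Fintype V] [Fintype W] [DecidableRel F.Adj] [DecidableRel H.Adj]

theorem exists_isPackingOn_bijOn_closedNbhd [DecidableEq V] (v : W) (h : V)
    (hF : #F.edgeFinset + H.degree h + 1 ≤ Fintype.card W) :
    ∃ (S : Finset W) (p : W → V), v ∈ S ∧ IsPackingOn F H S p ∧
      Set.BijOn p S (closedNbhd H h) ∧
      ∀ u ∉ closedNbhd H h, load H (F.degree ·) S p u ≤ H.degree h := by
  classical
  obtain ⟨L, hvL, hcard, hind, hdeg⟩ := exists_isIndepSet_insert_degree_le_one F v hF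
  obtain ⟨p₀, hp₀⟩ : ∃ p₀ : W → V, Set.BijOn p₀ L (H.neighborFinset h) := by
    have : Nonempty V := ⟨h⟩
    refine L.finite_toSet.exists_bijOn_of_encard_eq ?_
    rw [Set.encard_coe_eq_coe_finsetCard, Set.encard_coe_eq_coe_finsetCard, hcard,
      H.card_neighborFinset_eq_degree]
  let p := Function.update p₀ v h
  have hpv : p v = h := Function.update_self ..
  have hpL : Set.BijOn p L (H.neighborFinset h) := hp₀.congr fun s hs =>
    (Function.update_of_ne (ne_of_mem_of_not_mem hs hvL) _ _).symm
  have hpS : Set.BijOn p (insert v L : Finset W) (closedNbhd H h) := by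
    have := hpL.insert (a := v) (by simp [hpv])
    rwa [hpv, ← coe_insert, ← coe_insert] at this
  refine ⟨insert v L, p, mem_insert_self v L,
    ⟨hpS.injOn, fun a ha b hb hab => absurd hab (hind ha hb hab.ne)⟩, hpS, fun u hu => ?_⟩
  have huh : ¬ H.Adj u (p v) := fun huh =>
    hu ((mem_closedNbhd H).2 (.inr (hpv ▸ huh.symm)))
  rw [load_insert H (F.degree ·) hvL, if_neg huh, zero_add]
  calc load H (F.degree ·) L p u ≤ ∑ s ∈ L, F.degree s :=
        sum_le_sum_of_subset (filter_subset _ _)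
    _ ≤ #L * 1 := sum_le_card_nsmul _ _ _ hdeg
    _ = H.degree h := by rw [mul_one, hcard]

theorem exists_isBalancedPlacement_of_lt_degree {D t m : ℕ} (hD0 : 0 < D)
    (hD : ∀ v, H.degree v ≤ D) (hn : 200 * D ^ 2 ≤ Fintype.card V) {X : Finset V}
    (hX : #X ≤ (D + 1) ^ 2) {B : Finset W} (hF : #F.edgeFinset ≤ Fintype.card V)
    (ht : Fintype.card V < 20 * D * (t + 1)) (hB : ∀ s ∈ B, t < F.degree s)
    (hm : ∀ s ∈ B, F.degree s ≤ m) :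
    #B ≤ 40 * D ∧
      ∃ g : W → V, IsBalancedPlacement H X (F.degree ·) (Fintype.card V / 10 + m) B g := by
  set n := Fintype.card V
  have hcardB : #B ≤ 40 * D := by
    have hsum : #B * (t + 1) ≤ 2 * #F.edgeFinset := card_mul_le_two_mul_card_edgeFinset F hB
    refine Nat.le_of_mul_le_mul_right (c := t + 1) ?_ t.succ_pos
    linarith
  have hdeg : ∑ s ∈ B, F.degree s ≤ 2 * n :=
    calc ∑ s ∈ B, F.degree s ≤ ∑ s, F.degree s := sum_le_sum_of_subset (subset_univ B)
      _ = 2 * #F.edgeFinset := F.sum_degrees_eq_twice_card_edges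
      _ ≤ 2 * n := Nat.mul_le_mul_left 2 hF
  have hn200 : 200 ≤ n := le_trans (by nlinarith) hn
  refine ⟨hcardB, exists_isBalancedPlacement hD hm (r := 40 * D) ?_ ?_⟩
  · calc D * ∑ s ∈ B, F.degree s ≤ D * (40 * (n / 10)) :=
          Nat.mul_le_mul_left D (by omega)
      _ = 40 * D * (n / 10) := by ring
  · have hBD : #B * (D + 1) ≤ 40 * D * (D + 1) := Nat.mul_le_mul_right _ hcardB
    nlinarith

theorem exists_isPackingOn_degree_le_load_le {D t : ℕ} (hD0 : 0 < D)
    (hD : ∀ v, H.degree v ≤ D) (hVW : Fintype.card W = Fintype.card V)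
    (hn : 200 * D ^ 2 ≤ Fintype.card V) (ht : Fintype.card V < 20 * D * (t + 1)) (h : V)
    (hF : #F.edgeFinset + H.degree h + 1 ≤ Fintype.card V) :
    ∃ (Q : Finset W) (q : W → V), IsPackingOn F H Q q ∧ #Q ≤ 41 * D + 1 ∧
      (∀ s ∉ Q, F.degree s ≤ t) ∧ ∀ u, (∀ s ∈ Q, q s ≠ u) →
        load H (F.degree ·) Q q u ≤ D + (Fintype.card V / 10 + Fintype.card V / 2) := by
  classical
  have : Nonempty W := Fintype.card_pos_iff.1 (by omega)
  obtain ⟨v, hv⟩ := F.exists_maximal_degree_vertex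
  obtain ⟨S, p, hvS, hp, hbij, hpload⟩ := exists_isPackingOn_bijOn_closedNbhd v h (hVW ▸ hF)
  have hcardS : #S ≤ D + 1 := by
    rw [hbij.finsetCard_eq, card_closedNbhd]
    exact Nat.succ_le_succ (hD h)
  let B : Finset W := {s | s ∉ S ∧ t < F.degree s}
  have hhalf : ∀ s ∈ B, F.degree s ≤ Fintype.card V / 2 := fun s hs => by
    have hsv : s ≠ v := fun hsv => (mem_filter.1 hs).2.1 (hsv ▸ hvS)
    have hadd := degree_add_degree_le_card_edgeFinset_add_one F hsv
    have hmax := F.degree_le_maxDegree s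
    omega
  obtain ⟨hcardB, g, hg⟩ := exists_isBalancedPlacement_of_lt_degree hD0 hD hn
    (card_biUnion_closedNbhd_le H hD h) (by omega) ht (fun s hs => (mem_filter.1 hs).2.2) hhalf
  refine ⟨S ∪ B, S.piecewise p g, hp.piecewise_isBalancedPlacement hbij.mapsTo hg, ?_,
    fun s hs => ?_, fun u hu => ?_⟩
  · have hcard := card_union_le S B
    omega
  · by_contra! hlt
    exact hs (by simp [B, hlt, em])
  · have hu' : u ∉ closedNbhd H h := fun hmem => by
      obtain ⟨s, hs, rfl⟩ := hbij.surjOn hmem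
      exact hu s (mem_union_left B hs) (piecewise_eq_of_mem _ _ _ hs)
    exact (load_piecewise_le _ S B p g u).trans
      (add_le_add ((hpload u hu').trans (hD h)) (hg.load_le u))

theorem containsCopy_compl_of_card_edgeFinset_le {D : ℕ} (hD0 : 0 < D)
    (hD : ∀ v, H.degree v ≤ D) (hVW : Fintype.card W = Fintype.card V)
    (hn : 200 * D ^ 2 ≤ Fintype.card V) (h : V)
    (hF : #F.edgeFinset + H.degree h + 1 ≤ Fintype.card V) :
    ContainsCopy Fᶜ H := by
  obtain ⟨t, ht, htD⟩ : ∃ t, Fintype.card V < 20 * D * (t + 1) ∧ 20 * (D * t) ≤ Fintype.card V :=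
    ⟨_, Nat.lt_mul_div_succ _ (by positivity), by
      rw [← mul_assoc]
      exact Nat.mul_div_le _ (20 * D)⟩
  have htn : t ≤ D * t := Nat.le_mul_of_pos_left t hD0
  have hDn : 200 * D ≤ Fintype.card V := le_trans (by nlinarith) hn
  obtain ⟨Q, q, hq, hcard, hdeg, hload⟩ := exists_isPackingOn_degree_le_load_le hD0 hD hVW hn
    ht h hF
  obtain ⟨e, he⟩ := hq.exists_equiv hD hVW hdeg fun u hu => by
    have := hload u hu
    omega
  exact he.containsCopy_compl

end Sparse

end Packing

section Extremal

theorem ncard_edgeSet_add_ncard_edgeSet_compl {V : Type*} [Fintype V] (G : SimpleGraph V) :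
    G.edgeSet.ncard + Gᶜ.edgeSet.ncard = (Fintype.card V).choose 2 := by
  classical
  rw [← Set.ncard_union_eq (SimpleGraph.disjoint_edgeSet.2 disjoint_compl_right),
    ← SimpleGraph.edgeSet_sup, sup_compl_eq_top, ← SimpleGraph.coe_edgeFinset,
    Set.ncard_coe_finset, SimpleGraph.card_edgeFinset_top_eq_card_choose_two]

theorem choose_two_eq_choose_two_pred_add {n : ℕ} (hn : 0 < n) :
    n.choose 2 = (n - 1).choose 2 + (n - 1) := by
  simpa [add_comm] using Nat.choose_eq_choose_pred_add hn two_pos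

theorem exists_ncard_neighborSet_eq_ncard_edgeSet_eq {V : Type*} [Fintype V] (v : V) {d : ℕ}
    (hd : d < Fintype.card V) :
    ∃ G : SimpleGraph V, (G.neighborSet v).ncard = d ∧
      G.edgeSet.ncard = (Fintype.card V - 1).choose 2 + d := by
  classical
  obtain ⟨A, hA, hAcard⟩ := exists_subset_card_eq (s := univ.erase v)
    (n := Fintype.card V - 1 - d) (by rw [card_erase_of_mem (mem_univ v), card_univ]; omega)
  have hvA : v ∉ A := fun hv => notMem_erase v univ (hA hv)
  have hinj : Function.Injective fun a => s(v, a) := fun _ _ => Sym2.congr_right.1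
  let star : Finset (Sym2 V) := A.image fun a => s(v, a)
  have hstar : (star : Set (Sym2 V)) ⊆ (⊤ : SimpleGraph V).edgeSet := fun e he => by
    obtain ⟨a, ha, rfl⟩ := mem_image.1 (mem_coe.1 he)
    exact (ne_of_mem_of_not_mem ha hvA).symm
  have hcard : #star = Fintype.card V - 1 - d := by
    rw [card_image_of_injective A hinj, hAcard]
  refine ⟨(⊤ : SimpleGraph V).deleteEdges star, ?_, ?_⟩
  · have hnbhd : ((⊤ : SimpleGraph V).deleteEdges star).neighborSet v =
        ((insert v A)ᶜ : Finset V) := by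
      ext a
      have hmem : s(v, a) ∈ star ↔ a ∈ A := hinj.mem_finset_image
      simp [hmem, eq_comm, and_comm]
    rw [hnbhd, Set.ncard_coe_finset, card_compl, card_insert_of_notMem hvA, hAcard]
    omega
  · have hpos : 0 < Fintype.card V := by omega
    rw [SimpleGraph.edgeSet_deleteEdges, Set.ncard_sdiff hstar, Set.ncard_coe_finset, hcard,
      ← SimpleGraph.coe_edgeFinset, Set.ncard_coe_finset,
      SimpleGraph.card_edgeFinset_top_eq_card_choose_two, choose_two_eq_choose_two_pred_add hpos]
    omega

theorem ContainsCopy.minDegree_le_ncard_neighborSet {α β : Type*} [Fintype α] [Fintype β]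
    {G : SimpleGraph α} {H : SimpleGraph β} [DecidableRel H.Adj] (hGH : ContainsCopy G H)
    (hcard : Fintype.card β = Fintype.card α) (v : α) :
    H.minDegree ≤ (G.neighborSet v).ncard := by
  obtain ⟨f, hf, hadj⟩ := hGH
  obtain ⟨u, rfl⟩ := (hf.bijective_of_nat_card_le (by simp [hcard])).2 v
  calc H.minDegree ≤ H.degree u := H.minDegree_le_degree u
    _ = (H.neighborSet u).ncard := by
      rw [← H.card_neighborFinset_eq_degree, ← Set.ncard_coe_finset, H.coe_neighborFinset]
    _ ≤ (G.neighborSet (f u)).ncard :=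
      Set.ncard_le_ncard_of_injOn f (fun w hw => hadj u w hw) hf.injOn

end Extremal

theorem mul_sq_le_of_le_sqrt_div {c d n : ℕ} (hc : 0 < c) (h : (d : ℝ) ≤ Real.sqrt n / c) :
    (c * d) ^ 2 ≤ n := by
  have hsqrt : (c * d : ℝ) ≤ Real.sqrt n := by
    rw [mul_comm]
    exact (le_div_iff₀ (by positivity)).1 h
  exact_mod_cast (Real.le_sqrt (by positivity) n.cast_nonneg).1 hsqrt

theorem turan_number_sparse_spanning_general {V : Type*} [Fintype V] (H : SimpleGraph V)
    [DecidableRel H.Adj] (hδ : 0 < H.minDegree)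
    (hΔ : 200 * H.maxDegree ^ 2 ≤ Fintype.card V) :
    exNum (Fintype.card V) H = (Fintype.card V - 1).choose 2 + H.minDegree - 1 := by
  classical
  have : Nonempty V := by
    by_contra! hV
    simp at hδ
  obtain ⟨h, hh⟩ := H.exists_minimal_degree_vertex
  have hdeg : H.minDegree < Fintype.card V := hh ▸ H.degree_lt_card_verts h
  have hpos : 0 < Fintype.card V := hδ.trans hdeg
  refine IsGreatest.csSup_eq ⟨?_, ?_⟩
  · obtain ⟨G, hnbhd, hedge⟩ := exists_ncard_neighborSet_eq_ncard_edgeSet_eq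
      (⟨0, hpos⟩ : Fin (Fintype.card V)) (d := H.minDegree - 1) (by rw [Fintype.card_fin]; omega)
    rw [Fintype.card_fin] at hedge
    refine ⟨G, fun hG => ?_, by omega⟩
    have hle := hG.minDegree_le_ncard_neighborSet (Fintype.card_fin _).symm ⟨0, hpos⟩
    omega
  · rintro _ ⟨G, hG, rfl⟩
    by_contra! hlt
    have hadd := ncard_edgeSet_add_ncard_edgeSet_compl G
    rw [Fintype.card_fin, choose_two_eq_choose_two_pred_add hpos, ← SimpleGraph.coe_edgeFinset Gᶜ,
      Set.ncard_coe_finset] at hadd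
    refine hG (compl_compl G ▸ containsCopy_compl_of_card_edgeFinset_le (F := Gᶜ)
      (hδ.trans_le H.minDegree_le_maxDegree) H.degree_le_maxDegree (Fintype.card_fin _) hΔ h ?_)
    omega

theorem turan_number_sparse_spanning :
    ∃ n₀ : ℕ, ∀ n : ℕ, n₀ ≤ n →
      ∀ (H : SimpleGraph (Fin n)) [DecidableRel H.Adj],
        (∀ v : Fin n, 0 < H.degree v) →
        (H.maxDegree : ℝ) ≤ Real.sqrt n / 200 →
        exNum n H = (n - 1).choose 2 + H.minDegree - 1 := by
  refine ⟨1, fun n hn H _ hpos hΔ => ?_⟩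
  have : Nonempty (Fin n) := ⟨⟨0, hn⟩⟩
  have hsq : (200 * H.maxDegree) ^ 2 ≤ n := mul_sq_le_of_le_sqrt_div (by norm_num) hΔ
  simpa using turan_number_sparse_spanning_general H
    (H.le_minDegree_of_forall_le_degree 1 hpos) (by rw [Fintype.card_fin]; linarith)
end

section
/- There exists n₀ such that for every n ≥ n₀, ex(n, C_n) = C(n−1,2) + 1, where C_n denotes the cycle on n vertices. Equivalently, for n ≥ n₀, every simple graph on n vertices with more than C(n−1,2) + 1 edges contains a Hamilton cycle, and there is a non-Hamiltonian graph on n vertices with C(n−1,2) + 1 edges. -/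
/-!
By Bondy and Chvátal, adding an edge `uv` with `deg u + deg v ≥ n` cannot create Hamiltonicity: a
Hamilton cycle through `uv` leaves a Hamilton path `u = x₀, …, xₙ₋₁ = v` of the original graph, and
by pigeonhole some `i` has `u ~ xᵢ₊₁` and `v ~ xᵢ`, so reversing the final segment of the path
closes it into a Hamilton cycle. Applied to an edge-maximal counterexample, this yields Ore's
theorem: if nonadjacent vertices always have degree sum at least `n ≥ 3`, the graph is Hamiltonian.

A graph with more than `C(n-1, 2) + 1` edges misses at most `n - 3` pairs, so any two vertices have
degree sum at most `n - 2` in the complement and hence at least `n` in the graph. The bound is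
attained by the complete graph on `n - 1` vertices with a pendant edge.
-/

open Finset SimpleGraph

section Hamiltonian

variable {V : Type*} [Fintype V] [DecidableEq V] {G : SimpleGraph V} {u v : V}

theorem cycleGraph_card_isContained_iff_isHamiltonian (hV : 3 ≤ Fintype.card V) :
    cycleGraph (Fintype.card V) ⊑ G ↔ G.IsHamiltonian := by
  simp only [cycleGraph_isContained_iff hV, SimpleGraph.IsHamiltonian,
    Walk.isHamiltonianCycle_iff_isCycle_and_length_eq, show Fintype.card V ≠ 1 by lia, ne_eq,
    not_false_eq_true, forall_const]

theorem isHamiltonian_top (hV : 3 ≤ Fintype.card V) : (⊤ : SimpleGraph V).IsHamiltonian := by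
  let e := (Fintype.equivFin V).symm
  exact (cycleGraph_card_isContained_iff_isHamiltonian hV).mp
    ⟨⟨⟨e, fun h => e.injective.ne h.ne⟩, e.injective⟩⟩

theorem two_le_degree_of_isHamiltonian [DecidableRel G.Adj] (hG : G.IsHamiltonian)
    [Nontrivial V] (v : V) : 2 ≤ G.degree v := by
  obtain ⟨c, hc⟩ := hG.exists_isHamiltonianCycle v
  rw [← card_pair hc.isCycle.snd_ne_penultimate, ← card_neighborFinset_eq_degree]
  refine card_le_card (insert_subset_iff.mpr ⟨?_, singleton_subset_iff.mpr ?_⟩)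
  · exact (mem_neighborFinset ..).mpr (c.adj_snd hc.isCycle.not_nil)
  · exact (mem_neighborFinset ..).mpr (c.adj_penultimate hc.isCycle.not_nil).symm

theorem isHamiltonian_of_isHamiltonian_walk (hV : 3 ≤ Fintype.card V) {p : G.Walk u v}
    (hp : p.IsHamiltonian) (huv : G.Adj v u) : G.IsHamiltonian := by
  have hlength : (Walk.cons huv p).length = Fintype.card V := by
    rw [Walk.length_cons, hp.length_eq, Nat.sub_add_cancel (by lia)]
  refine fun _ => ⟨v, .cons huv p, Walk.isHamiltonianCycle_iff_isCycle_and_length_eq.mpr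
    ⟨Walk.isCycle_iff_isPath_tail_and_le_length.mpr ⟨?_, hV.trans_eq hlength.symm⟩, hlength⟩⟩
  simpa using hp.isPath

theorem isHamiltonian_of_crossing (hV : 3 ≤ Fintype.card V) {p : G.Walk u v}
    (hp : p.IsHamiltonian) {i : ℕ} (hu : G.Adj u (p.getVert (i + 1)))
    (hv : G.Adj v (p.getVert i)) : G.IsHamiltonian := by
  by_cases hi : i < p.length
  swap
  · simp [p.getVert_of_length_le (not_lt.mp hi)] at hv
  refine isHamiltonian_of_isHamiltonian_walk hV
    (p := (p.drop (i + 1)).append (.cons hv (p.take i).reverse)) (fun w => ?_) hu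
  have hsplit : p.support = (p.take i).support ++ (p.drop (i + 1)).support := by
    rw [Walk.support_take, Walk.drop_support_eq_support_drop_min, min_eq_left hi,
      List.take_append_drop]
  rw [Walk.support_append, Walk.support_cons, List.tail_cons, Walk.support_reverse,
    List.count_append, List.count_reverse, add_comm, ← List.count_append, ← hsplit, hp w]

theorem exists_crossing_of_card_le_degree_add_degree [DecidableRel G.Adj] {p : G.Walk u v}
    (hp : p.IsHamiltonian) (hdeg : Fintype.card V ≤ G.degree u + G.degree v) :
    ∃ i, G.Adj u (p.getVert (i + 1)) ∧ G.Adj v (p.getVert i) := by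
  let A := {i ∈ range p.length | G.Adj u (p.getVert (i + 1))}
  let B := {i ∈ range p.length | G.Adj v (p.getVert i)}
  have hA : G.degree u ≤ #A := by
    refine (card_le_card fun w hw => ?_).trans (card_image_le (f := fun i => p.getVert (i + 1)))
    rw [mem_neighborFinset] at hw
    obtain ⟨_ | i, rfl, hi⟩ := Walk.mem_support_iff_exists_getVert.mp (hp.mem_support w)
    · simp at hw
    · exact mem_image_of_mem _ (mem_filter.mpr ⟨mem_range.mpr hi, hw⟩)
  have hB : G.degree v ≤ #B := by
    refine (card_le_card fun w hw => ?_).trans (card_image_le (f := p.getVert))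
    rw [mem_neighborFinset] at hw
    obtain ⟨i, rfl, hi⟩ := Walk.mem_support_iff_exists_getVert.mp (hp.mem_support w)
    refine mem_image_of_mem _ (mem_filter.mpr ⟨mem_range.mpr (hi.lt_of_ne ?_), hw⟩)
    rintro rfl
    simp at hw
  have hlt : #(range p.length) < #A + #B := by
    have := Fintype.card_pos_iff.mpr ⟨u⟩
    rw [card_range, hp.length_eq]
    lia
  obtain ⟨i, hi⟩ := inter_nonempty_of_card_lt_card_add_card (filter_subset _ _)
    (filter_subset _ _) hlt
  rw [mem_inter, mem_filter, mem_filter] at hi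
  exact ⟨i, hi.1.2, hi.2.2⟩

theorem edges_subset_edgeSet_of_notMem_edges {V : Type*} {G : SimpleGraph V} {u v a b : V}
    {p : (G ⊔ edge u v).Walk a b} (hp : s(u, v) ∉ p.edges) : ∀ e ∈ p.edges, e ∈ G.edgeSet := by
  intro e he
  have := p.edges_subset_edgeSet he
  rw [edgeSet_sup] at this
  exact this.resolve_right fun h => hp (edgeSet_edge_subset h ▸ he)

omit [Fintype V] in
theorem isHamiltonianCycle_reverse {c : G.Walk u u} (hc : c.IsHamiltonianCycle) :
    c.reverse.IsHamiltonianCycle := by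
  rw [Walk.isHamiltonianCycle_iff_isCycle_and_support_count_tail_eq_one] at hc ⊢
  refine ⟨hc.1.reverse, fun w => ?_⟩
  rw [Walk.support_reverse, List.tail_reverse, List.count_reverse,
    ← c.tail_support_perm_dropLast_support.count_eq, hc.2 w]

omit [Fintype V] in
theorem exists_isHamiltonianCycle_snd_eq {a : V} {c : G.Walk a a} (hc : c.IsHamiltonianCycle)
    (huv : s(u, v) ∈ c.edges) : ∃ c' : G.Walk u u, c'.IsHamiltonianCycle ∧ c'.snd = v := by
  have hu := c.fst_mem_support_of_mem_edges huv
  have hadj : (c.rotate u hu).toSubgraph.Adj u v := by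
    rwa [Walk.toSubgraph_rotate, Walk.adj_toSubgraph_iff_mem_edges]
  have hrotate := hc.rotate hu
  rw [← Subgraph.mem_neighborSet, hrotate.isCycle.neighborSet_toSubgraph_endpoint] at hadj
  obtain hsnd | hpenultimate := hadj
  · exact ⟨_, hrotate, hsnd.symm⟩
  · exact ⟨_, isHamiltonianCycle_reverse hrotate, by rw [Walk.snd_reverse, hpenultimate]⟩

theorem exists_isHamiltonian_walk_of_isHamiltonian_sup_edge (hG : ¬G.IsHamiltonian)
    (hGuv : (G ⊔ edge u v).IsHamiltonian) : ∃ p : G.Walk v u, p.IsHamiltonian := by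
  have hV : Fintype.card V ≠ 1 := fun h => hG (.of_card_eq_one h)
  obtain ⟨a, c, hc⟩ := hGuv hV
  have huv : s(u, v) ∈ c.edges := by
    by_contra huv
    have hedges := edges_subset_edgeSet_of_notMem_edges huv
    refine hG fun _ => ⟨a, c.transfer G hedges, ?_⟩
    rw [Walk.isHamiltonianCycle_iff_isCycle_and_length_eq, Walk.length_transfer]
    exact ⟨hc.isCycle.transfer hedges, hc.length_eq⟩
  obtain ⟨c, hc, hsnd⟩ := exists_isHamiltonianCycle_snd_eq hc huv
  cases c with
  | nil => exact absurd rfl hc.ne_nil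
  | cons h p =>
    obtain rfl : _ = v := by simpa using hsnd
    have hedges := edges_subset_edgeSet_of_notMem_edges ((p.cons_isCycle_iff h).mp hc.isCycle).2
    refine ⟨p.transfer G hedges, fun w => ?_⟩
    simpa [Walk.support_transfer] using hc.isHamiltonian_tail w

theorem isHamiltonian_of_isHamiltonian_sup_edge [DecidableRel G.Adj]
    (hdeg : Fintype.card V ≤ G.degree u + G.degree v) (hGuv : (G ⊔ edge u v).IsHamiltonian) :
    G.IsHamiltonian := by
  by_contra hG
  have hV : 3 ≤ Fintype.card V := by
    obtain ⟨a, c, hc⟩ := hGuv fun h => hG (.of_card_eq_one h)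
    exact hc.isCycle.three_le_length.trans_eq hc.length_eq
  obtain ⟨p, hp⟩ := exists_isHamiltonian_walk_of_isHamiltonian_sup_edge hG hGuv
  obtain ⟨i, hv, hu⟩ :=
    exists_crossing_of_card_le_degree_add_degree hp (hdeg.trans_eq (add_comm _ _))
  exact hG (isHamiltonian_of_crossing hV hp hv hu)

theorem isHamiltonian_of_card_le_degree_add_degree [DecidableRel G.Adj]
    (hV : 3 ≤ Fintype.card V)
    (hdeg : ∀ u v, u ≠ v → ¬G.Adj u v → Fintype.card V ≤ G.degree u + G.degree v) :
    G.IsHamiltonian := by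
  classical
  by_contra hG
  obtain ⟨H, hGH, hH⟩ :=
    Finite.exists_le_maximal (p := fun H : SimpleGraph V => ¬H.IsHamiltonian) hG
  have hH_ne_top : H ≠ ⊤ := by
    rintro rfl
    exact hH.prop (isHamiltonian_top hV)
  obtain ⟨u, v, huv, hadj⟩ := ne_top_iff_exists_not_adj.mp hH_ne_top
  have hdegH : Fintype.card V ≤ H.degree u + H.degree v :=
    (hdeg u v huv fun h => hadj (hGH h)).trans
      (add_le_add (degree_le_of_le hGH) (degree_le_of_le hGH))
  have hHuv : (H ⊔ edge u v).IsHamiltonian :=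
    not_not.mp (hH.not_prop_of_gt (lt_sup_edge H u v huv hadj))
  exact hH.prop (isHamiltonian_of_isHamiltonian_sup_edge hdegH hHuv)

end Hamiltonian

section EdgeCount

variable {V : Type*} [Fintype V] [DecidableEq V] {G : SimpleGraph V} {u v : V}

theorem choose_two_eq_pred_add_choose_two {n : ℕ} (hn : 0 < n) :
    n.choose 2 = (n - 1) + (n - 1).choose 2 := by
  simpa using Nat.choose_eq_choose_pred_add hn two_pos

theorem card_edgeFinset_add_card_edgeFinset_compl (G : SimpleGraph V) [DecidableRel G.Adj] :
    #G.edgeFinset + #Gᶜ.edgeFinset = (Fintype.card V).choose 2 := by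
  rw [← card_edgeFinset_top_eq_card_choose_two, ← card_union_of_disjoint
    (disjoint_edgeFinset.mpr disjoint_compl_right), ← edgeFinset_sup]
  congr! 2
  exact sup_compl_eq_top

omit [DecidableEq V] in
theorem degree_add_degree_le_card_edgeFinset_add_one_s12 [DecidableRel G.Adj] (huv : u ≠ v) :
    G.degree u + G.degree v ≤ #G.edgeFinset + 1 := by
  classical
  have hinter : #(G.incidenceFinset u ∩ G.incidenceFinset v) ≤ 1 := by
    rw [← card_singleton s(u, v)]
    refine card_le_card (coe_subset.mp ?_)
    simpa only [incidenceFinset, coe_inter, Set.coe_toFinset, coe_singleton]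
      using G.incidenceSet_inter_incidenceSet_subset huv
  have hunion : #(G.incidenceFinset u ∪ G.incidenceFinset v) ≤ #G.edgeFinset :=
    card_le_card (union_subset (G.incidenceFinset_subset u) (G.incidenceFinset_subset v))
  rw [← card_incidenceFinset_eq_degree, ← card_incidenceFinset_eq_degree,
    ← card_union_add_card_inter]
  exact add_le_add hunion hinter

theorem isHamiltonian_of_choose_two_lt_ncard_edgeSet
    (hG : (Fintype.card V - 1).choose 2 + 1 < G.edgeSet.ncard) : G.IsHamiltonian := by
  classical
  rw [← coe_edgeFinset, Set.ncard_coe_finset] at hG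
  have hpos : 0 < Fintype.card V := by
    have hchoose := (Nat.zero_lt_of_lt hG).trans_le G.card_edgeFinset_le_card_choose_two
    exact two_pos.trans_le (Nat.choose_ne_zero_iff.mp hchoose.ne')
  have hcompl := card_edgeFinset_add_card_edgeFinset_compl G
  rw [choose_two_eq_pred_add_choose_two hpos] at hcompl
  refine isHamiltonian_of_card_le_degree_add_degree (by lia) fun u v huv _ => ?_
  have hdeg := degree_add_degree_le_card_edgeFinset_add_one_s12 (G := Gᶜ) huv
  rw [degree_compl, degree_compl] at hdeg
  lia

theorem card_edgeFinset_top_deleteIncidenceSet_sup_edge (huv : u ≠ v) :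
    #((⊤ : SimpleGraph V).deleteIncidenceSet u ⊔ edge u v).edgeFinset
      = (Fintype.card V - 1).choose 2 + 1 := by
  rw [card_edgeFinset_sup_edge _ (by simp [deleteIncidenceSet_adj]) huv,
    card_edgeFinset_deleteIncidenceSet, card_edgeFinset_top_eq_card_choose_two,
    complete_graph_degree, choose_two_eq_pred_add_choose_two (Fintype.card_pos_iff.mpr ⟨u⟩),
    Nat.add_sub_cancel_left]

theorem not_isHamiltonian_deleteIncidenceSet_sup_edge (huv : u ≠ v) :
    ¬(G.deleteIncidenceSet u ⊔ edge u v).IsHamiltonian := by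
  classical
  intro hG
  have : Nontrivial V := ⟨u, v, huv⟩
  have hdeg : (G.deleteIncidenceSet u ⊔ edge u v).degree u ≤ 1 := by
    refine card_le_one_iff_subset_singleton.mpr ⟨v, fun w hw => ?_⟩
    have : w = v ∧ u ≠ w := by simpa [deleteIncidenceSet_adj, edge_adj, huv] using hw
    exact mem_singleton.mpr this.1
  exact absurd (two_le_degree_of_isHamiltonian hG u) (by lia)

theorem exists_ncard_edgeSet_eq_and_not_isHamiltonian [Nontrivial V] :
    ∃ G : SimpleGraph V,
      G.edgeSet.ncard = (Fintype.card V - 1).choose 2 + 1 ∧ ¬G.IsHamiltonian := by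
  obtain ⟨u, v, huv⟩ := exists_pair_ne V
  refine ⟨_, ?_, not_isHamiltonian_deleteIncidenceSet_sup_edge (G := ⊤) huv⟩
  rw [← card_edgeFinset_top_deleteIncidenceSet_sup_edge huv, ← Set.ncard_coe_finset,
    coe_edgeFinset]

end EdgeCount

section ExtremalNumber

variable {n : ℕ}

theorem containsCopy_iff_isContained {α β : Type*} {G : SimpleGraph α} {H : SimpleGraph β} :
    ContainsCopy G H ↔ H ⊑ G :=
  ⟨fun ⟨f, hf, hadj⟩ => ⟨⟨⟨f, @hadj⟩, hf⟩⟩,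
    fun ⟨f⟩ => ⟨f, f.injective, fun _ _ => f.toHom.map_adj⟩⟩

theorem containsCopy_cycleGraph_iff_isHamiltonian (hn : 3 ≤ n) {G : SimpleGraph (Fin n)} :
    ContainsCopy G (cycleGraph n) ↔ G.IsHamiltonian := by
  have := cycleGraph_card_isContained_iff_isHamiltonian (G := G) (by rwa [Fintype.card_fin])
  rwa [Fintype.card_fin, ← containsCopy_iff_isContained] at this

theorem exNum_cycleGraph (hn : 3 ≤ n) : exNum n (cycleGraph n) = (n - 1).choose 2 + 1 := by
  have : Nontrivial (Fin n) := Fin.nontrivial_iff_two_le.mpr (by lia)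
  obtain ⟨G, hcard, hG⟩ := exists_ncard_edgeSet_eq_and_not_isHamiltonian (V := Fin n)
  rw [Fintype.card_fin] at hcard
  refine IsGreatest.csSup_eq (a := (n - 1).choose 2 + 1) ⟨⟨G, ?_, hcard.symm⟩, ?_⟩
  · rwa [containsCopy_cycleGraph_iff_isHamiltonian hn]
  · rintro _ ⟨H, hH, rfl⟩
    rw [containsCopy_cycleGraph_iff_isHamiltonian hn] at hH
    by_contra! hlt
    exact hH (isHamiltonian_of_choose_two_lt_ncard_edgeSet (by rwa [Fintype.card_fin]))

end ExtremalNumber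

theorem ore_theorem :
    ∃ n₀ : ℕ, ∀ n : ℕ, n₀ ≤ n →
      exNum n (SimpleGraph.cycleGraph n) = (n - 1).choose 2 + 1 ∧
      (∀ G : SimpleGraph (Fin n),
        (n - 1).choose 2 + 1 < G.edgeSet.ncard → G.IsHamiltonian) ∧
      (∃ G : SimpleGraph (Fin n),
        G.edgeSet.ncard = (n - 1).choose 2 + 1 ∧ ¬ G.IsHamiltonian) := by
  refine ⟨3, fun n hn => ⟨exNum_cycleGraph hn, fun G hG => ?_, ?_⟩⟩
  · exact isHamiltonian_of_choose_two_lt_ncard_edgeSet (by rwa [Fintype.card_fin])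
  · have : Nontrivial (Fin n) := Fin.nontrivial_iff_two_le.mpr (by lia)
    simpa only [Fintype.card_fin] using
      exists_ncard_edgeSet_eq_and_not_isHamiltonian (V := Fin n)
end

section
/- There exists n₀ such that for every n ≥ n₀ the following holds: if H is a simple graph on n vertices with no isolated vertices and maximum degree Δ(H) ≤ √n/200, then every simple graph G on n vertices with at least C(n−1,2) + δ(H) edges contains a subgraph isomorphic to H. -/
/-!
It suffices to place the vertices of `H` bijectively on those of `D = Gᶜ` so that no edge of `H`
lands on an edge of `D`. By the edge count, `D` has fewer than `n - δ(H)` edges, hence only few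
vertices of large degree, and these are placed first. A vertex `v` of maximum degree receives a
vertex `x` of minimum degree in `H`, whose neighbours go to an independent set of low-degree
non-neighbours of `v`. Any other vertex of `D` has degree at most `n / 2`, so the remaining
high-degree vertices can be given pairwise non-adjacent vertices of `H`, spread out so that every
vertex of `H` sees total degree at most `3 n / 4` among them. Then every remaining conflict has an
endpoint `a` outside the part fixed so far, and `a` can be exchanged with a vertex `c` so that
neither takes part in a conflict any more and no new conflict arises; repeating this removes all
conflicts.
-/

open Finset

namespace GraphPacking

variable {V W : Type*}

section Equivalences

lemma exists_equiv_eqOn_apply_eq (f : V ≃ W) {P : Finset V} {a : V} {w : W}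
    (ha : a ∉ P) (hw : f.symm w ∉ P) : ∃ g : V ≃ W, Set.EqOn g f P ∧ g a = w := by
  classical
  refine ⟨(Equiv.swap a (f.symm w)).trans f, fun b hb => ?_, by simp⟩
  have hba : b ≠ a := fun h => ha (h ▸ hb)
  have hbw : b ≠ f.symm w := fun h => hw (h ▸ hb)
  simp [Equiv.swap_apply_of_ne_of_ne hba hbw]

lemma symm_eq_of_eqOn {f g : V ≃ W} {P : Finset V} (hgf : Set.EqOn g f P) {w : W}
    (hw : f.symm w ∈ P) : g.symm w = f.symm w := by
  rw [Equiv.symm_apply_eq, hgf hw, Equiv.apply_symm_apply]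

variable [Fintype V] [Fintype W]

lemma exists_equiv_mapsTo (hVW : Fintype.card V = Fintype.card W) {S : Finset V} {A : Finset W}
    (hSA : #S ≤ #A) : ∃ f : V ≃ W, Set.MapsTo f S A := by
  classical
  obtain ⟨B, hBA, hB⟩ := exists_subset_card_eq hSA
  let e : S ≃ B := S.equivOfCardEq hB.symm
  let e' : {a // a ∉ S} ≃ {w // w ∉ B} := Fintype.equivOfCardEq <| by
    simp [Fintype.card_subtype_compl, hVW, hB]
  refine ⟨(Equiv.sumCompl (· ∈ S)).symm.trans ((e.sumCongr e').trans (Equiv.sumCompl (· ∈ B))),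
    fun a ha => hBA ?_⟩
  simp [Equiv.sumCompl_symm_apply_of_pos (p := (· ∈ S)) ha]

end Equivalences

section DegreeSums

variable [Fintype V] (D : SimpleGraph V) [DecidableRel D.Adj]

lemma sum_degrees_le_two_mul_card_edgeFinset (S : Finset V) :
    ∑ v ∈ S, D.degree v ≤ 2 * #D.edgeFinset := by
  rw [← D.sum_degrees_eq_twice_card_edges]
  exact sum_le_univ_sum_of_nonneg fun _ => Nat.zero_le _

lemma card_filter_lt_degree_mul_le (t : ℕ) :
    #{v | t < D.degree v} * (t + 1) ≤ 2 * #D.edgeFinset := by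
  rw [← smul_eq_mul]
  exact (card_nsmul_le_sum _ _ _ fun v hv => (mem_filter.1 hv).2).trans
    (sum_degrees_le_two_mul_card_edgeFinset D _)

lemma degree_add_degree_le_card_edgeFinset_add_one {u v : V} (huv : u ≠ v) :
    D.degree u + D.degree v ≤ #D.edgeFinset + 1 := by
  classical
  have hinter : #(D.incidenceFinset u ∩ D.incidenceFinset v) ≤ 1 := by
    rw [← card_singleton s(u, v)]
    refine card_le_card fun e he => ?_
    simp only [mem_inter, SimpleGraph.mem_incidenceFinset] at he
    simpa using D.incidenceSet_inter_incidenceSet_subset huv he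
  have hunion : #(D.incidenceFinset u ∪ D.incidenceFinset v) ≤ #D.edgeFinset :=
    card_le_card (union_subset (D.incidenceFinset_subset u) (D.incidenceFinset_subset v))
  have := card_union_add_card_inter (D.incidenceFinset u) (D.incidenceFinset v)
  simp only [SimpleGraph.card_incidenceFinset_eq_degree] at this
  omega

end DegreeSums

section IndependentSets

variable [Fintype V] (D : SimpleGraph V) [DecidableRel D.Adj]

-- Choose from every edge an endpoint of larger weight.
lemma exists_isVertexCover_card_le {α : Type*} [LinearOrder α] (r : V → α) :
    ∃ C : Finset V, #C ≤ #D.edgeFinset ∧ D.IsVertexCover C ∧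
      ∀ a ∉ C, ∀ b, D.Adj a b → r a ≤ r b := by
  classical
  have hend : ∀ e : Sym2 V, ∃ a ∈ e, ∀ b ∈ e, r b ≤ r a := by
    intro e
    induction e with | _ a b
    rcases le_total (r a) (r b) with hab | hab
    · exact ⟨b, by simp, by simpa using hab⟩
    · exact ⟨a, by simp, by simpa using hab⟩
  choose φ hφ hφmax using hend
  have hmem : ∀ a b, D.Adj a b → φ s(a, b) ∈ D.edgeFinset.image φ := fun a b hab =>
    mem_image_of_mem _ (by simpa using hab)
  refine ⟨D.edgeFinset.image φ, card_image_le, fun a b hab => ?_, fun a ha b hab => ?_⟩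
  · rcases Sym2.mem_iff.1 (hφ s(a, b)) with h | h
    · exact .inl (h ▸ hmem a b hab)
    · exact .inr (h ▸ hmem a b hab)
  · rcases Sym2.mem_iff.1 (hφ s(a, b)) with h | h
    · exact absurd (h ▸ hmem a b hab) ha
    · exact h ▸ hφmax s(a, b) a (by simp)

lemma exists_isIndepSet_of_non_neighbors {t : ℕ} (hheavy : #{w | t < D.degree w} ≤ t) (v : V) :
    ∃ A : Finset V, Fintype.card V ≤ #A + #D.edgeFinset + 1 ∧ D.IsIndepSet A ∧
      ∀ a ∈ A, a ≠ v ∧ ¬ D.Adj v a ∧ D.degree a ≤ t := by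
  classical
  obtain ⟨C, hCcard, hCcover, hCmin⟩ :=
    exists_isVertexCover_card_le (D.deleteIncidenceSet v) (D.degree ·)
  refine ⟨(insert v (D.neighborFinset v) ∪ C)ᶜ, ?_, fun a ha b hb _ hD => ?_, fun a ha => ?_⟩
  · have hC : #C ≤ #D.edgeFinset - D.degree v := by
      rwa [← D.card_edgeFinset_deleteIncidenceSet v]
    have hv : D.degree v ≤ #D.edgeFinset := by
      rw [← D.card_incidenceFinset_eq_degree]
      exact card_le_card (D.incidenceFinset_subset v)
    have h₁ := card_union_le (insert v (D.neighborFinset v)) C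
    have h₂ := card_insert_le v (D.neighborFinset v)
    rw [SimpleGraph.card_neighborFinset_eq_degree] at h₂
    rw [card_compl]
    omega
  · simp only [mem_coe, mem_compl, mem_union, mem_insert, not_or] at ha hb
    rcases hCcover (SimpleGraph.deleteIncidenceSet_adj.2 ⟨hD, ha.1.1, hb.1.1⟩) with h | h
    exacts [ha.2 h, hb.2 h]
  · simp only [mem_compl, mem_union, mem_insert, not_or, SimpleGraph.mem_neighborFinset] at ha
    obtain ⟨⟨hav, hva⟩, haC⟩ := ha
    refine ⟨hav, hva, not_lt.1 fun hta => ?_⟩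
    -- Being uncovered, `a` has no neighbour of smaller degree: too many heavy vertices.
    obtain ⟨b, hab, hbt⟩ : ∃ b ∈ D.neighborFinset a, b ∉ ({w | t < D.degree w} : Finset V) :=
      exists_mem_notMem_of_card_lt_card (hheavy.trans_lt (by simpa using hta))
    rw [SimpleGraph.mem_neighborFinset] at hab
    have hbv : b ≠ v := fun h => hva (h ▸ hab.symm)
    have hdeg : D.degree a ≤ D.degree b :=
      hCmin a haC b (SimpleGraph.deleteIncidenceSet_adj.2 ⟨hab, hav, hbv⟩)
    exact hbt (by simpa using hta.trans_le hdeg)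

end IndependentSets

section Spreading

variable {H : SimpleGraph V} [DecidableRel H.Adj]

variable (H) in
/-- The vertices placed on `Q` are pairwise non-adjacent and not adjacent to `P`, and every vertex
of `H` sees at most `s` of the weight `d` placed on its neighbours. -/
structure IsSpread (f : V ≃ W) (P : Finset V) (Q : Finset W) (d : W → ℕ) (s : ℕ) : Prop where
  not_adj : ∀ w ∈ Q, ∀ a, a ∈ P ∨ f a ∈ Q → ¬ H.Adj (f.symm w) a
  load_le : ∀ y, ∑ w ∈ Q with H.Adj (f.symm w) y, d w ≤ s

lemma IsSpread.insert_apply [DecidableEq W] {f g : V ≃ W} {P : Finset V} {Q : Finset W} {d : W → ℕ}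
    {c m : ℕ} (h : IsSpread H f P Q d (m + c))
    (hgf : ∀ b, b ∈ P ∨ f b ∈ Q → g b = f b) {a : V} (hq : g a ∉ Q)
    (ha : ∀ b, b ∈ P ∨ f b ∈ Q → ¬ H.Adj a b)
    (hload : ∀ y, H.Adj a y → ∑ w ∈ Q with H.Adj (f.symm w) y, d w ≤ m) (hd : d (g a) ≤ c) :
    IsSpread H g P (insert (g a) Q) d (m + c) := by
  have hsymm : ∀ w ∈ Q, g.symm w = f.symm w := fun w hw => by
    rw [Equiv.symm_apply_eq, hgf _ (by simp [hw]), Equiv.apply_symm_apply]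
  have hold : ∀ b, g b ∈ Q → f b ∈ Q := fun b hb => by
    rwa [← g.symm_apply_apply b, hsymm _ hb, Equiv.apply_symm_apply]
  refine ⟨fun w hw b hb => ?_, fun y => ?_⟩
  · rw [mem_insert, g.apply_eq_iff_eq, or_left_comm] at hb
    have hb' : b = a ∨ b ∈ P ∨ f b ∈ Q := hb.imp_right (.imp_right (hold b))
    rcases mem_insert.1 hw with rfl | hwQ
    · rw [g.symm_apply_apply]
      rcases hb' with rfl | hb'
      exacts [H.loopless.irrefl _, ha b hb']
    · rw [hsymm w hwQ]
      rcases hb' with rfl | hb'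
      · exact fun hadj => ha _ (.inr (by simpa using hwQ)) hadj.symm
      · exact h.not_adj w hwQ b hb'
  · have hsum : ∑ w ∈ Q with H.Adj (g.symm w) y, d w = ∑ w ∈ Q with H.Adj (f.symm w) y, d w :=
      sum_congr (filter_congr fun w hw => by rw [hsymm w hw]) fun _ _ => rfl
    rw [filter_insert, g.symm_apply_apply]
    split_ifs with hay
    · rw [sum_insert (by simp [hq]), hsum, add_comm]
      exact add_le_add (hload y hay) hd
    · rw [hsum]
      exact h.load_le y

variable [Fintype V] {Δ : ℕ}

lemma card_biUnion_neighborFinset_le [DecidableEq V] {ι : Type*} (hΔ : ∀ a, H.degree a ≤ Δ)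
    (S : Finset ι) (x : ι → V) : #(S.biUnion fun i => H.neighborFinset (x i)) ≤ #S * Δ :=
  card_biUnion_le_card_mul _ _ _ fun i _ => by simpa using hΔ (x i)

lemma exists_notMem_forall_not_adj [DecidableEq V] (hΔ : ∀ a, H.degree a ≤ Δ) {C Y : Finset V}
    (hcard : #C * (Δ + 1) + #Y * Δ < Fintype.card V) :
    ∃ a ∉ C, ∀ b ∈ C ∪ Y, ¬ H.Adj a b := by
  have hlt : #(C ∪ (C ∪ Y).biUnion (H.neighborFinset ·)) < #(univ : Finset V) :=
    calc _ ≤ #C + #((C ∪ Y).biUnion (H.neighborFinset ·)) := card_union_le _ _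
      _ ≤ #C + #(C ∪ Y) * Δ := by gcongr; exact card_biUnion_neighborFinset_le hΔ _ id
      _ ≤ #C + (#C + #Y) * Δ := by gcongr; exact card_union_le _ _
      _ = #C * (Δ + 1) + #Y * Δ := by ring
      _ < _ := hcard
  obtain ⟨a, -, ha⟩ := exists_mem_notMem_of_card_lt_card hlt
  rw [mem_union, not_or] at ha
  exact ⟨a, ha.1, fun b hb hab => ha.2 (mem_biUnion.2 ⟨b, hb, by simpa using hab.symm⟩)⟩

lemma card_overloaded_mul_le {ι : Type*} (hΔ : ∀ a, H.degree a ≤ Δ) (Q : Finset ι) (x : ι → V)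
    (d : ι → ℕ) (m : ℕ) :
    #{y | m < ∑ i ∈ Q with H.Adj (x i) y, d i} * (m + 1) ≤ Δ * ∑ i ∈ Q, d i :=
  calc #{y | m < ∑ i ∈ Q with H.Adj (x i) y, d i} * (m + 1)
    _ ≤ ∑ y with m < ∑ i ∈ Q with H.Adj (x i) y, d i, ∑ i ∈ Q with H.Adj (x i) y, d i :=
        smul_eq_mul _ (m + 1) ▸ card_nsmul_le_sum _ _ _ fun y hy => (mem_filter.1 hy).2
    _ ≤ ∑ y, ∑ i ∈ Q with H.Adj (x i) y, d i := sum_le_univ_sum_of_nonneg fun _ => Nat.zero_le _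
    _ = ∑ i ∈ Q, ∑ y with H.Adj (x i) y, d i := sum_comm' (by simp [and_comm])
    _ = ∑ i ∈ Q, H.degree (x i) * d i := by
        simp [← SimpleGraph.neighborFinset_eq_filter]
    _ ≤ Δ * ∑ i ∈ Q, d i := by
        rw [mul_sum]
        gcongr with i
        exact hΔ _

-- Few vertices already see weight more than `m`, so a new host can be chosen away from all of
-- their neighbourhoods.
lemma IsSpread.exists_insert [DecidableEq W] {f : V ≃ W} {P : Finset V} {Q : Finset W} {d : W → ℕ}
    {c m k : ℕ} (hΔ : ∀ a, H.degree a ≤ Δ) (h : IsSpread H f P Q d (m + c)) {q : W}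
    (hqQ : q ∉ Q) (hqP : f.symm q ∉ P) (hd : d q ≤ c)
    (hsum : Δ * ∑ w ∈ Q, d w ≤ k * (m + 1))
    (hcard : (#P + #Q) * (Δ + 1) + k * Δ < Fintype.card V) :
    ∃ g : V ≃ W, Set.EqOn g f P ∧ IsSpread H g P (insert q Q) d (m + c) := by
  classical
  let C : Finset V := P ∪ Q.map f.symm.toEmbedding
  let Y : Finset V := {y | m < ∑ w ∈ Q with H.Adj (f.symm w) y, d w}
  have hmemC : ∀ a, a ∈ C ↔ a ∈ P ∨ f a ∈ Q := by simp [C]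
  have hC : #C ≤ #P + #Q := (card_union_le _ _).trans_eq (by rw [card_map])
  have hY : #Y ≤ k := Nat.le_of_mul_le_mul_right
    ((card_overloaded_mul_le hΔ Q f.symm d m).trans hsum) m.succ_pos
  obtain ⟨a, haC, ha⟩ := exists_notMem_forall_not_adj hΔ (C := C) (Y := Y) <|
    lt_of_le_of_lt (by gcongr) hcard
  obtain ⟨g, hgf, rfl⟩ := exists_equiv_eqOn_apply_eq f haC (w := q) (by simp [hmemC, hqQ, hqP])
  have hay : ∀ y, H.Adj a y → ∑ w ∈ Q with H.Adj (f.symm w) y, d w ≤ m := fun y hay => by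
    have hyY : y ∉ Y := fun hy => ha y (mem_union_right _ hy) hay
    simpa [Y] using hyY
  exact ⟨g, fun b hb => hgf ((hmemC b).2 (.inl hb)), h.insert_apply
    (fun b hb => hgf ((hmemC b).2 hb)) hqQ (fun b hb => ha b (mem_union_left _ ((hmemC b).2 hb)))
    hay hd⟩

lemma exists_isSpread (hΔ : ∀ a, H.degree a ≤ Δ) (f : V ≃ W) {P : Finset V} {Q : Finset W}
    {d : W → ℕ} {c m k : ℕ} (hPQ : ∀ w ∈ Q, f.symm w ∉ P) (hd : ∀ w ∈ Q, d w ≤ c)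
    (hsum : Δ * ∑ w ∈ Q, d w ≤ k * (m + 1))
    (hcard : (#P + #Q) * (Δ + 1) + k * Δ < Fintype.card V) :
    ∃ g : V ≃ W, Set.EqOn g f P ∧ IsSpread H g P Q d (m + c) := by
  classical
  induction Q using Finset.induction_on with
  | empty => exact ⟨f, Set.eqOn_refl _ _, by simp, by simp⟩
  | insert q Q hq ih =>
    simp only [forall_mem_insert] at hPQ hd
    have hsum' : Δ * ∑ w ∈ Q, d w ≤ k * (m + 1) :=
      le_trans (by gcongr; exact subset_insert q Q) hsum
    have hcard' : (#P + #Q) * (Δ + 1) + k * Δ < Fintype.card V :=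
      lt_of_le_of_lt (by gcongr; exact subset_insert q Q) hcard
    obtain ⟨g, hgf, hg⟩ := ih hPQ.2 hd.2 hsum' hcard'
    have hqP : g.symm q ∉ P := fun hqP =>
      hPQ.1 (by rwa [symm_eq_of_eqOn hgf.symm hqP])
    obtain ⟨g', hg'g, hg'⟩ := hg.exists_insert hΔ hq hqP hd.1 hsum' hcard'
    exact ⟨g', hg'g.trans hgf, hg'⟩

end Spreading

section Conflicts

/-- The edges of `H` that the placement `f` maps onto edges of `D`; `f` packs `H` and `D` when
there are none. -/
def conflictGraph (H : SimpleGraph V) (D : SimpleGraph W) (f : V ≃ W) : SimpleGraph V :=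
  H ⊓ D.comap f

variable {H : SimpleGraph V} {D : SimpleGraph W} {f g : V ≃ W} {P : Finset V}

lemma conflictGraph_adj {a b : V} :
    (conflictGraph H D f).Adj a b ↔ H.Adj a b ∧ D.Adj (f a) (f b) := Iff.rfl

lemma isIndepSet_conflictGraph_congr (hgf : Set.EqOn g f P)
    (h : (conflictGraph H D f).IsIndepSet P) : (conflictGraph H D g).IsIndepSet P := by
  intro a ha b hb hab hconf
  rw [conflictGraph_adj, hgf ha, hgf hb] at hconf
  exact h ha hb hab hconf

lemma conflictGraph_swap_lt [DecidableEq V] {a b c : V} (hab : (conflictGraph H D f).Adj a b)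
    (hac : ¬ H.Adj a c) (ha : ∀ y, H.Adj a y → ¬ D.Adj (f c) (f y))
    (hc : ∀ y, H.Adj c y → ¬ D.Adj (f a) (f y)) :
    conflictGraph H D ((Equiv.swap a c).trans f) < conflictGraph H D f := by
  have hne : ∀ x y, (conflictGraph H D ((Equiv.swap a c).trans f)).Adj x y → x ≠ a ∧ x ≠ c := by
    rintro x y ⟨hH, hD⟩
    simp only [SimpleGraph.comap_adj, Equiv.trans_apply] at hD
    constructor <;> rintro rfl
    · have hyc : y ≠ c := fun h => hac (h ▸ hH)
      rw [Equiv.swap_apply_left, Equiv.swap_apply_of_ne_of_ne hH.ne' hyc] at hD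
      exact ha y hH hD
    · have hya : y ≠ a := fun h => hac (h ▸ hH.symm)
      rw [Equiv.swap_apply_right, Equiv.swap_apply_of_ne_of_ne hya hH.ne'] at hD
      exact hc y hH hD
  refine lt_of_le_not_ge (fun x y hxy => ?_) fun hle => (hne a b (hle hab)).1 rfl
  obtain ⟨hxa, hxc⟩ := hne x y hxy
  obtain ⟨hya, hyc⟩ := hne y x hxy.symm
  rw [conflictGraph_adj] at hxy ⊢
  simpa [Equiv.swap_apply_of_ne_of_ne, hxa, hxc, hya, hyc] using hxy

variable [Fintype V] [Fintype W] [DecidableRel H.Adj] [DecidableRel D.Adj] {Δ s t : ℕ}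

lemma exists_exchange_vertex (hΔ : ∀ a, H.degree a ≤ Δ) {a : V} (hdeg : D.degree (f a) ≤ t)
    (hsum : ∑ b ∈ H.neighborFinset a, D.degree (f b) ≤ s)
    (hcard : #P + s + t * Δ + Δ < Fintype.card V) :
    ∃ c ∉ P, ¬ H.Adj a c ∧ (∀ b, H.Adj a b → ¬ D.Adj (f c) (f b)) ∧
      ∀ b, H.Adj c b → ¬ D.Adj (f a) (f b) := by
  classical
  let X : Finset V :=
    (H.neighborFinset a).biUnion fun b => (D.neighborFinset (f b)).map f.symm.toEmbedding
  let Y : Finset V := (D.neighborFinset (f a)).biUnion fun w => H.neighborFinset (f.symm w)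
  have hX : #X ≤ s := card_biUnion_le.trans (by simpa using hsum)
  have hY : #Y ≤ t * Δ := (card_biUnion_neighborFinset_le hΔ _ _).trans <| by
    simpa using Nat.mul_le_mul_right Δ hdeg
  have hN : #(H.neighborFinset a) ≤ Δ := by simpa using hΔ a
  have hlt : #(P ∪ X ∪ Y ∪ H.neighborFinset a) < #(univ : Finset V) :=
    calc _ ≤ #(P ∪ X ∪ Y) + #(H.neighborFinset a) := card_union_le _ _
      _ ≤ #(P ∪ X) + #Y + #(H.neighborFinset a) := by gcongr; exact card_union_le _ _
      _ ≤ #P + #X + #Y + #(H.neighborFinset a) := by gcongr; exact card_union_le _ _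
      _ ≤ #P + s + t * Δ + Δ := by gcongr
      _ < _ := hcard
  obtain ⟨c, -, hc⟩ := exists_mem_notMem_of_card_lt_card hlt
  simp only [mem_union, not_or] at hc
  obtain ⟨⟨⟨hcP, hcX⟩, hcY⟩, hcN⟩ := hc
  refine ⟨c, hcP, by simpa using hcN, fun b hab hD => hcX ?_, fun b hcb hD => hcY ?_⟩
  · exact mem_biUnion.2 ⟨b, by simpa using hab, by simpa using hD.symm⟩
  · exact mem_biUnion.2 ⟨f b, by simpa using hD, by simpa using hcb.symm⟩

variable (H D f P s t) in
/-- `P` is a conflict-free set of vertices of `H` such that all conflicts of `f` outside it can be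
removed by swaps: a vertex outside `P` is placed on a vertex of `D` of degree at most `t`, and those
of its neighbours that are placed on vertices of degree more than `t` get total degree at most `s`
there. -/
structure IsCore : Prop where
  isIndepSet : (conflictGraph H D f).IsIndepSet P
  degree_le : ∀ a ∉ P, D.degree (f a) ≤ t
  load_le : ∀ a ∉ P, ∑ b ∈ H.neighborFinset a with t < D.degree (f b), D.degree (f b) ≤ s

namespace IsCore

lemma congr (h : IsCore H D f P s t) (hgf : Set.EqOn g f P) : IsCore H D g P s t := by
  have hlight : ∀ a ∉ P, D.degree (g a) ≤ t := fun a ha => by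
    have hga : f.symm (g a) ∉ P := fun hP => ha <| by
      rwa [← symm_eq_of_eqOn hgf hP, g.symm_apply_apply] at hP
    exact f.apply_symm_apply (g a) ▸ h.degree_le _ hga
  have hheavy : ∀ b, (t < D.degree (g b) ↔ t < D.degree (f b)) ∧
      (t < D.degree (f b) → D.degree (g b) = D.degree (f b)) := fun b => by
    by_cases hb : b ∈ P
    · rw [hgf hb]
      exact ⟨Iff.rfl, fun _ => rfl⟩
    · have := hlight b hb
      have := h.degree_le b hb
      omega
  refine ⟨isIndepSet_conflictGraph_congr hgf h.isIndepSet, hlight, fun a ha => ?_⟩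
  convert h.load_le a ha using 1
  exact sum_congr (filter_congr fun b _ => (hheavy b).1) fun b hb =>
    (hheavy b).2 (mem_filter.1 hb).2

lemma sum_degree_le (h : IsCore H D f P s t) (hΔ : ∀ a, H.degree a ≤ Δ) {a : V} (ha : a ∉ P) :
    ∑ b ∈ H.neighborFinset a, D.degree (f b) ≤ s + Δ * t := by
  rw [← sum_filter_add_sum_filter_not _ fun b => t < D.degree (f b)]
  refine add_le_add (h.load_le a ha) ?_
  calc _ ≤ #{b ∈ H.neighborFinset a | ¬ t < D.degree (f b)} * t :=
        sum_le_card_nsmul _ _ _ fun b hb => not_lt.1 (mem_filter.1 hb).2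
    _ ≤ Δ * t := by
        gcongr
        exact (card_filter_le _ _).trans (by simpa using hΔ a)

lemma exists_conflictGraph_eq_bot (h : IsCore H D f P s t) (hΔ : ∀ a, H.degree a ≤ Δ)
    (hcard : #P + (s + Δ * t) + t * Δ + Δ < Fintype.card V) :
    ∃ g : V ≃ W, conflictGraph H D g = ⊥ := by
  classical
  obtain ⟨g, hgf, hmin⟩ := (Set.toFinite {g : V ≃ W | Set.EqOn g f P}).exists_minimalFor
    (conflictGraph H D) _ ⟨f, Set.eqOn_refl _ _⟩
  have hg : IsCore H D g P s t := h.congr hgf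
  have hout : ∀ a ∉ P, ∀ b, ¬ (conflictGraph H D g).Adj a b := fun a ha b hab => by
    obtain ⟨c, hc, hac, hca, hcc⟩ :=
      exists_exchange_vertex hΔ (hg.degree_le a ha) (hg.sum_degree_le hΔ ha) hcard
    have hlt := conflictGraph_swap_lt hab hac hca hcc
    refine hlt.not_ge (hmin (fun y hy => ?_) hlt.le)
    have hya : y ≠ a := fun h => ha (h ▸ hy)
    have hyc : y ≠ c := fun h => hc (h ▸ hy)
    simpa [Equiv.swap_apply_of_ne_of_ne hya hyc] using hgf hy
  refine ⟨g, SimpleGraph.eq_bot_iff_forall_not_adj.2 fun a b hab => ?_⟩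
  by_cases ha : a ∈ P
  · by_cases hb : b ∈ P
    · exact hg.isIndepSet ha hb hab.ne hab
    · exact hout b hb a hab.symm
  · exact hout a ha b hab

end IsCore

end Conflicts

section Packing

variable [Fintype V] [Fintype W] {H : SimpleGraph V} {D : SimpleGraph W} [DecidableRel H.Adj]
  [DecidableRel D.Adj] {Δ t : ℕ}

lemma IsSpread.isCore [DecidableEq V] {f : V ≃ W} {P : Finset V} {Q : Finset W} {s : ℕ}
    (h : IsSpread H f P Q (D.degree ·) s) (hP : (conflictGraph H D f).IsIndepSet P)
    (hheavy : ∀ a, t < D.degree (f a) → f a ∈ Q ∨ a ∈ P ∧ H.neighborFinset a ⊆ P) :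
    IsCore H D f (P ∪ Q.map f.symm.toEmbedding) s t := by
  have hmem : ∀ a, a ∈ P ∪ Q.map f.symm.toEmbedding ↔ a ∈ P ∨ f a ∈ Q := by simp
  refine ⟨fun a ha b hb hab hconf => ?_, fun a ha => ?_, fun a ha => ?_⟩
  · rw [mem_coe, hmem] at ha hb
    have hnot : ∀ {a b}, f a ∈ Q → b ∈ P ∨ f b ∈ Q → ¬ H.Adj a b := fun {a b} haQ hb => by
      simpa using h.not_adj (f a) haQ b hb
    by_cases haQ : f a ∈ Q
    · exact hnot haQ hb hconf.1
    by_cases hbQ : f b ∈ Q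
    · exact hnot hbQ ha hconf.1.symm
    · exact hP (ha.resolve_right haQ) (hb.resolve_right hbQ) hab hconf
  · rw [hmem, not_or] at ha
    exact not_lt.1 fun hta => (hheavy a hta).elim ha.2 fun hP => ha.1 hP.1
  · rw [hmem, not_or] at ha
    have hsub : ({b ∈ H.neighborFinset a | t < D.degree (f b)} : Finset V).map f.toEmbedding ⊆
        {w ∈ Q | H.Adj (f.symm w) a} := fun w hw => by
      obtain ⟨b, hb, rfl⟩ := mem_map.1 hw
      simp only [mem_filter, SimpleGraph.mem_neighborFinset] at hb
      have hbQ : f b ∈ Q := (hheavy b hb.2).resolve_right fun hbP =>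
        ha.1 (hbP.2 (by simpa using hb.1.symm))
      simpa [hbQ] using hb.1.symm
    calc _ = _ := (sum_map _ f.toEmbedding (D.degree ·)).symm
      _ ≤ _ := sum_le_sum_of_subset hsub
      _ ≤ s := h.load_le a

lemma exists_equiv_isIndepSet_conflictGraph [DecidableEq V]
    (hVW : Fintype.card V = Fintype.card W) (hheavy : #{w | t < D.degree w} ≤ t) {x : V}
    (hD : #D.edgeFinset + H.degree x + 1 ≤ Fintype.card W) (v : W) :
    ∃ f : V ≃ W, f x = v ∧ (∀ b, H.Adj x b → D.degree (f b) ≤ t) ∧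
      (conflictGraph H D f).IsIndepSet ↑(insert x (H.neighborFinset x)) := by
  obtain ⟨A, hAcard, hAindep, hA⟩ := exists_isIndepSet_of_non_neighbors D hheavy v
  obtain ⟨f₀, hf₀⟩ := exists_equiv_mapsTo (S := H.neighborFinset x) (A := A) hVW <| by
    rw [SimpleGraph.card_neighborFinset_eq_degree]
    omega
  obtain ⟨f, hff₀, hfx⟩ := exists_equiv_eqOn_apply_eq f₀ (P := H.neighborFinset x) (a := x) (w := v)
    (by simp) (fun hv => (hA v (by simpa using hf₀ hv)).1 rfl)
  have hfA : ∀ b ∈ H.neighborFinset x, f b ∈ A := fun b hb => hff₀ hb ▸ hf₀ hb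
  refine ⟨f, hfx, fun b hb => (hA _ (hfA b (by simpa using hb))).2.2, fun a ha b hb hab hconf => ?_⟩
  rcases mem_insert.1 ha with rfl | ha <;> rcases mem_insert.1 hb with rfl | hb
  · exact hab rfl
  · exact (hA _ (hfA b hb)).2.1 (hfx ▸ hconf.2)
  · exact (hA _ (hfA a ha)).2.1 (hfx ▸ hconf.2.symm)
  · exact hAindep (hfA a ha) (hfA b hb) (f.injective.ne hab) hconf.2

lemma exists_isCore (hVW : Fintype.card V = Fintype.card W) (hΔ : ∀ a, H.degree a ≤ Δ) {x : V}
    (hD : #D.edgeFinset + H.degree x + 1 ≤ Fintype.card W)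
    (hheavy : #{w | t < D.degree w} ≤ t)
    (hcard : (#{w | t < D.degree w} + Δ + 1) * (Δ + 1) + 8 * Δ * Δ < Fintype.card V) :
    ∃ (f : V ≃ W) (P : Finset V), #P ≤ #{w | t < D.degree w} + Δ + 1 ∧
      IsCore H D f P (Fintype.card W / 4 + Fintype.card W / 2) t := by
  classical
  obtain ⟨v, -, hv⟩ := exists_max_image (univ : Finset W) (D.degree ·)
    (card_pos.1 (by rw [card_univ]; omega))
  obtain ⟨f, hfx, hflight, hfindep⟩ := exists_equiv_isIndepSet_conflictGraph hVW hheavy hD v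
  let P : Finset V := insert x (H.neighborFinset x)
  let Q : Finset W := ({w | t < D.degree w} : Finset W).erase v
  have hP : #P ≤ Δ + 1 := (card_insert_le _ _).trans (by simpa using hΔ x)
  have hQ : #Q ≤ #{w | t < D.degree w} := card_erase_le
  have hPQ : ∀ w ∈ Q, f.symm w ∉ P := fun w hw hwP => by
    simp only [Q, mem_erase, mem_filter, mem_univ, true_and] at hw
    rcases mem_insert.1 hwP with hwx | hwx
    · exact hw.1 (by rw [← hfx, ← hwx, f.apply_symm_apply])
    · rw [SimpleGraph.mem_neighborFinset] at hwx
      exact hw.2.not_ge (f.apply_symm_apply w ▸ hflight _ hwx)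
  have hdeg : ∀ w ∈ Q, D.degree w ≤ Fintype.card W / 2 := fun w hw => by
    have := degree_add_degree_le_card_edgeFinset_add_one D (ne_of_mem_erase hw)
    have := hv w (mem_univ w)
    omega
  have hsum : Δ * ∑ w ∈ Q, D.degree w ≤ 8 * Δ * (Fintype.card W / 4 + 1) := by
    have := sum_degrees_le_two_mul_card_edgeFinset D Q
    calc _ ≤ Δ * (8 * (Fintype.card W / 4 + 1)) := by gcongr; omega
      _ = _ := by ring
  obtain ⟨g, hgf, hg⟩ := exists_isSpread hΔ f hPQ hdeg hsum <|
    lt_of_le_of_lt (by gcongr ?_ * _ + _; omega) hcard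
  refine ⟨g, _, ?_, hg.isCore (isIndepSet_conflictGraph_congr hgf hfindep) fun a hta => ?_⟩
  · have := card_union_le P (Q.map g.symm.toEmbedding)
    rw [card_map] at this
    omega
  · by_cases hav : g a = v
    · obtain rfl : a = x := g.injective (by rw [hav, hgf (mem_insert_self _ _), hfx])
      exact .inr ⟨mem_insert_self _ _, subset_insert _ _⟩
    · exact .inl (by simp [Q, hav, hta])

theorem exists_conflictGraph_eq_bot (hVW : Fintype.card V = Fintype.card W)
    (hΔ : ∀ a, H.degree a ≤ Δ) (hΔcard : 400 * Δ ^ 2 ≤ Fintype.card V)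
    (hD : #D.edgeFinset + H.minDegree + 1 ≤ Fintype.card W) :
    ∃ f : V ≃ W, conflictGraph H D f = ⊥ := by
  have : Nonempty V := Fintype.card_pos_iff.1 (by omega)
  obtain ⟨x, hx⟩ := H.exists_minimal_degree_vertex
  rcases Δ.eq_zero_or_pos with rfl | hΔpos
  · refine ⟨Fintype.equivOfCardEq hVW, SimpleGraph.eq_bot_iff_forall_not_adj.2 fun a b hab => ?_⟩
    exact ((H.degree_pos_iff_exists_adj a).2 ⟨b, hab.1⟩).not_ge (hΔ a)
  rw [hx] at hD
  -- An exchange excludes at most about `3 / 4 * card V + 2 * Δ * t` vertices.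
  let t := Fintype.card V / (12 * Δ)
  have ht : 12 * Δ * t ≤ Fintype.card V := Nat.mul_div_le _ _
  have ht' : Fintype.card V < 12 * Δ * (t + 1) := Nat.lt_mul_div_succ _ (by omega)
  have hheavy : #{w | t < D.degree w} < 24 * Δ := by
    have := card_filter_lt_degree_mul_le D t
    refine lt_of_mul_lt_mul_right (a := t + 1) ?_ (Nat.zero_le _)
    linarith
  have hΔt : 24 * Δ ≤ t := (Nat.le_div_iff_mul_le (by omega)).2 (by nlinarith)
  obtain ⟨f, P, hP, hcore⟩ := exists_isCore hVW hΔ hD (hheavy.le.trans hΔt) <|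
    calc _ ≤ 25 * Δ * (Δ + 1) + 8 * Δ * Δ := by gcongr; omega
      _ < _ := by nlinarith
  refine hcore.exists_conflictGraph_eq_bot hΔ ?_
  have hΔsq : Δ ≤ Δ ^ 2 := Nat.le_self_pow two_ne_zero Δ
  have hcomm : t * Δ = Δ * t := mul_comm _ _
  have ht'' : 12 * (Δ * t) ≤ Fintype.card V := by rwa [← mul_assoc]
  omega

end Packing

lemma card_edgeFinset_compl_add_le [Fintype V] [Nonempty V] (G : SimpleGraph V)
    [DecidableRel Gᶜ.Adj] {δ : ℕ}
    (hG : (Fintype.card V - 1).choose 2 + δ ≤ G.edgeSet.ncard) :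
    #Gᶜ.edgeFinset + δ + 1 ≤ Fintype.card V := by
  classical
  have hsum : #G.edgeFinset + #Gᶜ.edgeFinset = (Fintype.card V).choose 2 := by
    rw [← SimpleGraph.card_edgeFinset_top_eq_card_choose_two, ← card_union_of_disjoint
      (SimpleGraph.disjoint_edgeFinset.2 disjoint_compl_right), ← SimpleGraph.edgeFinset_sup]
    congr 1
    ext e
    simp only [SimpleGraph.mem_edgeFinset, sup_compl_eq_top]
  have hchoose : (Fintype.card V).choose 2
      = (Fintype.card V - 1) + (Fintype.card V - 1).choose 2 := by
    obtain ⟨n, hn⟩ := Nat.exists_eq_succ_of_ne_zero (Fintype.card_ne_zero (α := V))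
    simp [hn, Nat.choose_succ_succ]
  have hpos : 0 < Fintype.card V := Fintype.card_pos
  rw [← SimpleGraph.coe_edgeFinset, Set.ncard_coe_finset] at hG
  omega

end GraphPacking

theorem dense_graph_contains_sparse_spanning_graph_general {V W : Type*} [Fintype V] [Fintype W]
    (hVW : Fintype.card V = Fintype.card W) (H : SimpleGraph V) [DecidableRel H.Adj]
    (hΔ : (H.maxDegree : ℝ) ≤ Real.sqrt (Fintype.card V) / 20) (G : SimpleGraph W)
    (hG : (Fintype.card W - 1).choose 2 + H.minDegree ≤ G.edgeSet.ncard) :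
    ContainsCopy G H := by
  classical
  rcases isEmpty_or_nonempty V with _ | _
  · exact ⟨isEmptyElim, Function.injective_of_subsingleton _, isEmptyElim⟩
  have : Nonempty W := (Fintype.equivOfCardEq hVW).symm.nonempty
  have hΔsq : 400 * H.maxDegree ^ 2 ≤ Fintype.card V := by
    have hsq : (20 * H.maxDegree : ℝ) ^ 2 ≤ Fintype.card V :=
      (Real.le_sqrt (by positivity) (by positivity)).1 (by linarith)
    exact_mod_cast (by linarith : (400 * H.maxDegree ^ 2 : ℝ) ≤ Fintype.card V)
  obtain ⟨f, hf⟩ := GraphPacking.exists_conflictGraph_eq_bot hVW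
    H.degree_le_maxDegree hΔsq (GraphPacking.card_edgeFinset_compl_add_le G hG)
  refine ⟨f, f.injective, fun a b hab => not_not.1 fun hGab => ?_⟩
  exact SimpleGraph.eq_bot_iff_forall_not_adj.1 hf a b ⟨hab, f.injective.ne hab.ne, hGab⟩

theorem dense_graph_contains_sparse_spanning_graph :
    ∃ n₀ : ℕ, ∀ n : ℕ, n₀ ≤ n →
      ∀ (H : SimpleGraph (Fin n)) [DecidableRel H.Adj],
        (∀ v : Fin n, 0 < H.degree v) →
        (H.maxDegree : ℝ) ≤ Real.sqrt n / 200 →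
        ∀ G : SimpleGraph (Fin n),
          (n - 1).choose 2 + H.minDegree ≤ G.edgeSet.ncard →
          ContainsCopy G H :=
  ⟨0, fun n _ H _ _ hΔ G hG => dense_graph_contains_sparse_spanning_graph_general rfl H
    (by rw [Fintype.card_fin]; exact hΔ.trans (by gcongr; norm_num)) G (by simpa using hG)⟩
end
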